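/- Let $T_1,\dots,T_l$ be commuting invertible ergodic measure preserving transformations of a probability space $(X,\mathcal{X},\mu)$ with $T_iT_j^{-1}$ ergodic for all $i\neq j$. If $\mathbb{E}(f_i|\mathcal{Z}_{l-1})=0$ for some $i\in\{1,\dots,l\}$, then $\frac{1}{N}\sum_{n=0}^{N-1}\prod_{j=1}^l f_j\circ T_j^n \to 0$ in $L^2(\mu)$; i.e., $\mathcal{Z}_{l-1}$ is a characteristic factor for these averages. -/

import Mathlib

open MeasureTheory Filter Finset

/-- The spaces `X^{[k]} = X^{2^k}`, realized as iterated squares. -/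
def HKBox (X : Type*) : ℕ → Type _
  | 0 => X
  | (k+1) => HKBox X k × HKBox X k

def HKBox.instMS (X : Type*) [m : MeasurableSpace X] : ∀ k, MeasurableSpace (HKBox X k)
  | 0 => m
  | (k+1) => @Prod.instMeasurableSpace _ _ (HKBox.instMS X k) (HKBox.instMS X k)

instance (X : Type*) [MeasurableSpace X] (k : ℕ) : MeasurableSpace (HKBox X k) :=
  HKBox.instMS X k

/-- The diagonal transformation `T^{[k]} = T × ⋯ × T` on `X^{[k]}`. -/
def HKBox.map {X : Type*} (T : X → X) : ∀ k, HKBox X k → HKBox X k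
  | 0 => T
  | (k+1) => fun p => (HKBox.map T k p.1, HKBox.map T k p.2)

/-- The σ-algebra of invariant sets of a transformation. -/
def invSigma {α : Type*} [m : MeasurableSpace α] (f : α → α) : MeasurableSpace α where
  MeasurableSet' s := MeasurableSet s ∧ f ⁻¹' s = s
  measurableSet_empty := ⟨MeasurableSet.empty, rfl⟩
  measurableSet_compl := fun s hs => ⟨hs.1.compl, by rw [Set.preimage_compl, hs.2]⟩
  measurableSet_iUnion := fun s hs => ⟨MeasurableSet.iUnion fun i => (hs i).1, by
    rw [Set.preimage_iUnion]; exact Set.iUnion_congr fun i => (hs i).2⟩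

/-- The product of `f` over all `2^k` coordinates of `X^{[k]}`. -/
def HKBox.prodFun {X : Type*} (f : X → ℝ) : ∀ k, HKBox X k → ℝ
  | 0 => f
  | (k+1) => fun p => HKBox.prodFun f k p.1 * HKBox.prodFun f k p.2

/-- `IsHKSeq μ T ν` asserts that `ν k` is the Host–Kra box measure `μ^{[k]}` of the
system `(X, μ, T)`: `ν 0 = μ` and `ν (k+1)` is the relatively independent square of
`ν k` over the σ-algebra of `T^{[k]}`-invariant sets. -/
def IsHKSeq {X : Type*} [MeasurableSpace X] (μ : Measure X) (T : X → X)
    (ν : ∀ k, Measure (HKBox X k)) : Prop :=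
  ν 0 = μ ∧ ∀ k, (∀ F' F'' : HKBox X k → ℝ, Measurable F' → Measurable F'' →
    (∃ C, ∀ x, |F' x| ≤ C) → (∃ C, ∀ x, |F'' x| ≤ C) →
    ∫ p, F' p.1 * F'' p.2 ∂(ν (k+1)) =
      ∫ x, ((ν k)[F' | invSigma (HKBox.map T k)]) x *
        ((ν k)[F'' | invSigma (HKBox.map T k)]) x ∂(ν k))

/-- The `k`-th Host–Kra seminorm of `f`, computed from a sequence `ν` of box measures:
`⦀f⦀_k = (∫ ∏_{ε} f(x_ε) dν k)^{1/2^k}`. -/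
noncomputable def HKseminorm {X : Type*} [MeasurableSpace X]
    (ν : ∀ k, Measure (HKBox X k)) (k : ℕ) (f : X → ℝ) : ℝ :=
  (∫ x, HKBox.prodFun f k x ∂(ν k)) ^ (((2 : ℝ) ^ k)⁻¹)

/-- Bounded measurable functions. -/
def BM {Y : Type*} [MeasurableSpace Y] (F : Y → ℝ) : Prop :=
  Measurable F ∧ ∃ C, ∀ x, |F x| ≤ C

/-- Ergodic averages. -/
noncomputable def av {Y : Type*} (R : Y → Y) (N : ℕ) (F : Y → ℝ) (x : Y) : ℝ :=
  (N : ℝ)⁻¹ * ∑ n ∈ Finset.range N, F (R^[n] x)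

section basics

theorem invSigma_le {Y : Type*} [m : MeasurableSpace Y] (R : Y → Y) : invSigma R ≤ m :=
  fun _ hs => hs.1

theorem BM.mul {Y : Type*} [MeasurableSpace Y] {F G : Y → ℝ} (hF : BM F) (hG : BM G) :
    BM (fun x => F x * G x) := by
  obtain ⟨hF, C, hC⟩ := hF
  obtain ⟨hG, D, hD⟩ := hG
  refine ⟨hF.mul hG, C * D, fun x => ?_⟩
  rw [abs_mul]
  exact mul_le_mul (hC x) (hD x) (abs_nonneg _) ((abs_nonneg _).trans (hC x))

theorem BM.add {Y : Type*} [MeasurableSpace Y] {F G : Y → ℝ} (hF : BM F) (hG : BM G) :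
    BM (fun x => F x + G x) := by
  obtain ⟨hF, C, hC⟩ := hF
  obtain ⟨hG, D, hD⟩ := hG
  exact ⟨hF.add hG, C + D, fun x => (abs_add_le _ _).trans (add_le_add (hC x) (hD x))⟩

theorem BM.sub {Y : Type*} [MeasurableSpace Y] {F G : Y → ℝ} (hF : BM F) (hG : BM G) :
    BM (fun x => F x - G x) := by
  obtain ⟨hF, C, hC⟩ := hF
  obtain ⟨hG, D, hD⟩ := hG
  exact ⟨hF.sub hG, C + D, fun x => (abs_sub _ _).trans (add_le_add (hC x) (hD x))⟩

theorem BM.const {Y : Type*} [MeasurableSpace Y] (c : ℝ) : BM (fun _ : Y => c) :=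
  ⟨measurable_const, |c|, fun _ => le_rfl⟩

theorem BM.sq {Y : Type*} [MeasurableSpace Y] {F : Y → ℝ} (hF : BM F) :
    BM (fun x => (F x) ^ 2) := by
  simpa [pow_two] using hF.mul hF

theorem BM.comp {Y Z : Type*} [MeasurableSpace Y] [MeasurableSpace Z] {F : Y → ℝ} (hF : BM F)
    {g : Z → Y} (hg : Measurable g) : BM (fun x => F (g x)) :=
  ⟨hF.1.comp hg, hF.2.choose, fun _ => hF.2.choose_spec _⟩

theorem BM.sum {Y ι : Type*} [MeasurableSpace Y] (s : Finset ι) {F : ι → Y → ℝ}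
    (hF : ∀ i, BM (F i)) : BM (fun x => ∑ i ∈ s, F i x) := by
  classical
  induction s using Finset.induction_on with
  | empty => simpa using BM.const 0
  | insert a s ha ih => simpa [Finset.sum_insert ha] using (hF a).add ih

theorem BM.prod {Y ι : Type*} [MeasurableSpace Y] (s : Finset ι) {F : ι → Y → ℝ}
    (hF : ∀ i, BM (F i)) : BM (fun x => ∏ i ∈ s, F i x) := by
  classical
  induction s using Finset.induction_on with
  | empty => simpa using BM.const 1
  | insert a s ha ih => simpa [Finset.prod_insert ha] using (hF a).mul ih

theorem BM.av {Y : Type*} [MeasurableSpace Y] {F : Y → ℝ} (hF : BM F) {R : Y → Y}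
    (hR : Measurable R) (N : ℕ) : BM (av R N F) :=
  (BM.const _).mul (BM.sum _ fun n => hF.comp (hR.iterate n))

theorem BM.memLp {Y : Type*} [MeasurableSpace Y] {F : Y → ℝ} (hF : BM F) (μ : Measure Y)
    [IsFiniteMeasure μ] (p : ENNReal) : MemLp F p μ := by
  obtain ⟨h, C, hC⟩ := hF
  exact MemLp.of_bound h.aestronglyMeasurable C (Eventually.of_forall hC)

theorem BM.int {Y : Type*} [MeasurableSpace Y] {F : Y → ℝ} (hF : BM F) (μ : Measure Y)
    [IsFiniteMeasure μ] : Integrable F μ :=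
  memLp_one_iff_integrable.1 (hF.memLp μ 1)

theorem BM.indicator {Y : Type*} [MeasurableSpace Y] {s : Set Y} (hs : MeasurableSet s) :
    BM (s.indicator (fun _ => (1:ℝ))) := by
  refine ⟨measurable_const.indicator hs, 1, fun x => ?_⟩
  by_cases h : x ∈ s <;> simp [h]

theorem inv_meas_comp {Y : Type*} [MeasurableSpace Y] {R : Y → Y} {g : Y → ℝ}
    (hg : Measurable[invSigma R] g) (x : Y) : g (R x) = g x := by
  have h := (hg (measurableSet_singleton (g x))).2
  have : x ∈ R ⁻¹' (g ⁻¹' {g x}) := by rw [h]; simp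
  simpa using this

/-- An a.e. invariant function is a.e. equal to an invariant one. -/
theorem aesm_of_ae_inv {Y : Type*} [m : MeasurableSpace Y] {lam : Measure Y} {R : Y → Y}
    (hR : MeasurePreserving R lam lam) {h : Y → ℝ} (hm : Measurable h)
    (hinv : (fun x => h (R x)) =ᵐ[lam] h) : AEStronglyMeasurable[invSigma R] h lam := by
  have hall : ∀ᵐ x ∂lam, ∀ n : ℕ, h (R^[n] x) = h x := by
    rw [ae_all_iff]
    intro n
    induction n with
    | zero => simp
    | succ n ih =>
      have := (hR.iterate n).quasiMeasurePreserving.ae hinv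
      filter_upwards [ih, this] with x h1 h2
      rw [Function.iterate_succ_apply', h2, h1]
  let g : Y → ℝ := fun x => limsup (fun n : ℕ => h (R^[n] x)) atTop
  have hg : Measurable g := Measurable.limsup fun n => hm.comp (hR.measurable.iterate n)
  have hgR : ∀ x, g (R x) = g x := by
    intro x
    have := Filter.limsup_nat_add (fun n : ℕ => h (R^[n] x)) 1
    simpa [g, Function.iterate_succ_apply] using this
  refine ⟨g, ?_, ?_⟩
  · refine Measurable.stronglyMeasurable ?_
    intro s hs
    refine ⟨hg hs, ?_⟩
    ext x
    simp [hgR]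
  · filter_upwards [hall] with x hx
    simp [g, hx]

end basics

section meanErgodic
variable {Y : Type*} [mY : MeasurableSpace Y] {lam : Measure Y} [IsProbabilityMeasure lam]
  {R : Y → Y}

theorem exists_ce (lam : Measure Y) [IsProbabilityMeasure lam] (R : Y → Y)
    {F : Y → ℝ} (hF : BM F) : ∃ g : Y → ℝ, BM g ∧ Measurable[invSigma R] g ∧
    lam[F | invSigma R] =ᵐ[lam] g ∧ ∀ x, g (R x) = g x := by
  obtain ⟨hFm, C, hC⟩ := hF
  have h0 := ae_bdd_abs_condExp_of_ae_bdd_abs (m := invSigma R) (μ := lam) (f := F) (R := (Real.toNNReal C : ℝ))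
    (Eventually.of_forall fun x => (hC x).trans (Real.le_coe_toNNReal C))
  set D : ℝ := (Real.toNNReal C : ℝ)
  have hD : 0 ≤ D := NNReal.coe_nonneg _
  have hce : Measurable[invSigma R] (lam[F | invSigma R]) :=
    stronglyMeasurable_condExp.measurable
  let g : Y → ℝ := fun x => max (-D) (min D ((lam[F | invSigma R]) x))
  have hg : Measurable[invSigma R] g := by
    have hφ : Measurable (fun y : ℝ => max (-D) (min D y)) := by fun_prop
    exact hφ.comp hce
  refine ⟨g, ⟨fun s hs => (hg hs).1, D, fun x => ?_⟩, hg, ?_, inv_meas_comp hg⟩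
  · rw [abs_le]
    exact ⟨le_max_left _ _, max_le (by linarith) (min_le_left _ _)⟩
  · filter_upwards [h0] with x hx
    rw [abs_le] at hx
    simp only [g]
    rw [min_eq_right hx.2, max_eq_right hx.1]

theorem integral_mul_ce {F g : Y → ℝ} (hF : BM F) (hg : BM g)
    (hgm : Measurable[invSigma R] g) :
    ∫ x, F x * g x ∂lam = ∫ x, (lam[F | invSigma R]) x * g x ∂lam := by
  have h1 := condExp_mul_of_stronglyMeasurable_right (μ := lam) (m := invSigma R) (f := F) (g := g)
    hgm.stronglyMeasurable ((hF.mul hg).int lam) (hF.int lam)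
  have h2 := integral_condExp (μ := lam) (f := F * g) (invSigma_le R)
  rw [integral_congr_ae h1] at h2
  exact h2.symm

theorem toLp_sum_range (lam : Measure Y) [IsProbabilityMeasure lam] {G : ℕ → Y → ℝ}
    (hG : ∀ n, BM (G n)) (N : ℕ) :
    ((BM.sum (Finset.range N) hG).memLp lam 2).toLp _ =
      ∑ n ∈ Finset.range N, ((hG n).memLp lam 2).toLp _ := by
  induction N with
  | zero =>
    simp only [Finset.range_zero, Finset.sum_empty]
    exact MemLp.toLp_zero _
  | succ N ih =>
    rw [Finset.sum_range_succ, ← ih, ← MemLp.toLp_add]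
    congr 1
    ext x
    simp [Finset.sum_range_succ]

theorem inner_toLp {a b : Y → ℝ} (ha : BM a) (hb : BM b) :
    inner ℝ ((ha.memLp lam 2).toLp _) ((hb.memLp lam 2).toLp _) = ∫ x, a x * b x ∂lam := by
  rw [L2.inner_def]
  apply integral_congr_ae
  filter_upwards [(ha.memLp lam 2).coeFn_toLp, (hb.memLp lam 2).coeFn_toLp] with x h1 h2
  rw [h1, h2]
  simp [mul_comm]

theorem integral_comp_mp {Z : Type*} [MeasurableSpace Z] {κ : Measure Z}
    {V : Y → Z} (hV : MeasurePreserving V lam κ) {G : Z → ℝ} (hG : Measurable G) :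
    ∫ x, G (V x) ∂lam = ∫ x, G x ∂κ := by
  rw [← hV.map_eq, integral_map hV.measurable.aemeasurable]
  exact hG.aestronglyMeasurable

theorem integral_av_mul (hR : Measurable R) {F G : Y → ℝ} (hF : BM F) (hG : BM G) (N : ℕ) :
    ∫ x, av R N F x * G x ∂lam =
      (N : ℝ)⁻¹ * ∑ n ∈ Finset.range N, ∫ x, F (R^[n] x) * G x ∂lam := by
  rw [← integral_finsetSum, ← integral_const_mul]
  · congr 1
    ext x
    simp only [av, Finset.sum_mul, mul_assoc]
  · exact fun n _ => ((hF.comp (hR.iterate n)).mul hG).int lam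

theorem iter_inv {g : Y → ℝ} (hgR : ∀ x, g (R x) = g x) (n : ℕ) (x : Y) :
    g (R^[n] x) = g x := by
  induction n with
  | zero => rfl
  | succ n ih => rw [Function.iterate_succ_apply', hgR, ih]

theorem avg_const {N : ℕ} (hN : N ≠ 0) (c : ℝ) :
    (N : ℝ)⁻¹ * ∑ _n ∈ Finset.range N, c = c := by
  have : (N : ℝ) ≠ 0 := by exact_mod_cast hN
  simp
  field_simp

/-- Averages integrated against an invariant function. -/
theorem integral_av_mul_inv (hR : MeasurePreserving R lam lam) {F g : Y → ℝ} (hF : BM F)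
    (hg : BM g) (hgR : ∀ x, g (R x) = g x) {N : ℕ} (hN : N ≠ 0) :
    ∫ x, av R N F x * g x ∂lam = ∫ x, F x * g x ∂lam := by
  rw [integral_av_mul hR.measurable hF hg]
  have : ∀ n, ∫ x, F (R^[n] x) * g x ∂lam = ∫ x, F x * g x ∂lam := by
    intro n
    rw [← integral_comp_mp (hR.iterate n) (hF.mul hg).1]
    simp only [iter_inv hgR]
  simp only [this]
  exact avg_const hN _

theorem mean_ergodic (hR : MeasurePreserving R lam lam) {F : Y → ℝ} (hF : BM F) :
    Tendsto (fun N => ∫ x, (av R N F x - (lam[F | invSigma R]) x) ^ 2 ∂lam) atTop (nhds 0) := by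
  let U := (Lp.compMeasurePreservingₗᵢ ℝ (E := ℝ) (p := 2) R hR)
  let u : Lp ℝ 2 lam := (hF.memLp lam 2).toLp F
  have hU : ‖U.toContinuousLinearMap‖ ≤ 1 := U.norm_toContinuousLinearMap_le
  have key := U.toContinuousLinearMap.tendsto_birkhoffAverage_orthogonalProjection hU u
  set S := (U.toContinuousLinearMap.eqLocus (1 : Lp ℝ 2 lam →L[ℝ] Lp ℝ 2 lam))
  set h : Lp ℝ 2 lam := (S.orthogonalProjectionOnto u : Lp ℝ 2 lam) with hh
  have hfix : U h = h := (S.orthogonalProjectionOnto u).2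
  have hit : ∀ n, U.toContinuousLinearMap^[n] u =
      ((hF.comp (hR.measurable.iterate n)).memLp lam 2).toLp _ := by
    intro n
    induction n with
    | zero => rfl
    | succ n ih =>
      rw [Function.iterate_succ_apply', ih]
      change Lp.compMeasurePreserving R hR _ = _
      rw [Lp.toLp_compMeasurePreserving]
      congr 1
  have hav : ∀ N, (birkhoffAverage ℝ U.toContinuousLinearMap _root_.id N u : Lp ℝ 2 lam)
      = ((hF.av hR.measurable N).memLp lam 2).toLp _ := by
    intro N
    simp only [birkhoffAverage, birkhoffSum, id, hit]
    rw [← toLp_sum_range lam (fun n => hF.comp (hR.measurable.iterate n)), ← MemLp.toLp_const_smul]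
    rfl
  simp only [hav] at key
  have hhm : Measurable (h : Y → ℝ) := (Lp.stronglyMeasurable h).measurable
  have hinv : (fun x => h (R x)) =ᵐ[lam] h := by
    have h1 := Lp.coeFn_compMeasurePreserving h hR
    have h2 : Lp.compMeasurePreserving R hR h = h := hfix
    rw [h2] at h1
    exact h1.symm
  have hce : (h : Y → ℝ) =ᵐ[lam] lam[F | invSigma R] := by
    have hi : Integrable (h : Y → ℝ) lam := (Lp.memLp h).integrable (by norm_num)
    refine ae_eq_condExp_of_forall_setIntegral_eq (invSigma_le R) (hF.int lam)
      (fun s _ _ => hi.integrableOn) ?_ (aesm_of_ae_inv hR hhm hinv)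
    intro s hs _
    have hb := BM.indicator hs.1
    have hbR : ∀ x, s.indicator (fun _ => (1:ℝ)) (R x) = s.indicator (fun _ => (1:ℝ)) x := by
      intro x
      have : R x ∈ s ↔ x ∈ s := by
        conv_rhs => rw [← hs.2]
        rfl
      by_cases hx : x ∈ s
      · simp [hx, this.2 hx]
      · simp [hx, mt this.1 hx]
    have h1 : Tendsto (fun N => inner ℝ (((hF.av hR.measurable N).memLp lam 2).toLp _)
        ((hb.memLp lam 2).toLp _)) atTop (nhds (inner ℝ h ((hb.memLp lam 2).toLp _))) :=
      key.inner tendsto_const_nhds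
    have h2 : Tendsto (fun N => inner ℝ (((hF.av hR.measurable N).memLp lam 2).toLp _)
        ((hb.memLp lam 2).toLp _)) atTop
        (nhds (∫ x, F x * s.indicator (fun _ => (1:ℝ)) x ∂lam)) := by
      refine tendsto_const_nhds.congr' ?_
      filter_upwards [eventually_ne_atTop 0] with N hN
      rw [inner_toLp (hF.av hR.measurable N) hb, integral_av_mul_inv hR hF hb hbR hN]
    have h3 := tendsto_nhds_unique h1 h2
    have h4 : inner ℝ h ((hb.memLp lam 2).toLp _) =
        ∫ x, h x * s.indicator (fun _ => (1:ℝ)) x ∂lam := by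
      rw [L2.inner_def]
      apply integral_congr_ae
      filter_upwards [(hb.memLp lam 2).coeFn_toLp] with x h1
      rw [h1]
      simp [mul_comm]
    rw [h4] at h3
    rw [← integral_indicator hs.1, ← integral_indicator hs.1]
    convert h3 using 2 <;> ext x <;> by_cases hx : x ∈ s <;> simp [hx]
  have hn : Tendsto (fun N => ‖((hF.av hR.measurable N).memLp lam 2).toLp _ - h‖ ^ 2) atTop
      (nhds 0) := by
    have := (tendsto_iff_norm_sub_tendsto_zero.1 key).pow 2
    simpa using this
  refine hn.congr fun N => ?_
  rw [← real_inner_self_eq_norm_sq, L2.inner_def]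
  apply integral_congr_ae
  filter_upwards [Lp.coeFn_sub (((hF.av hR.measurable N).memLp lam 2).toLp _) h,
    ((hF.av hR.measurable N).memLp lam 2).coeFn_toLp, hce] with x h1 h2 h3
  rw [h1, Pi.sub_apply, h2, h3]
  simp [pow_two]

/-- The bilinear form attached to the projection on invariant functions. -/
noncomputable def QQ (lam : Measure Y) (R : Y → Y) (a b : Y → ℝ) : ℝ :=
  ∫ x, (lam[a | invSigma R]) x * (lam[b | invSigma R]) x ∂lam

theorem QQ_comm (a b : Y → ℝ) : QQ lam R a b = QQ lam R b a := by
  simp only [QQ, mul_comm]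

theorem QQ_eq_left {a b : Y → ℝ} (ha : BM a) (hb : BM b) :
    QQ lam R a b = ∫ x, a x * (lam[b | invSigma R]) x ∂lam := by
  obtain ⟨g, hg, hgm, hgae, -⟩ := exists_ce lam R hb
  have h1 : QQ lam R a b = ∫ x, (lam[a | invSigma R]) x * g x ∂lam := by
    apply integral_congr_ae
    filter_upwards [hgae] with x hx
    rw [hx]
  rw [h1, ← integral_mul_ce ha hg hgm]
  apply integral_congr_ae
  filter_upwards [hgae] with x hx
  rw [hx]

/-- Convergence of the second moment of averages. -/
theorem integral_av_sq_sub (hR : MeasurePreserving R lam lam) {F : Y → ℝ} (hF : BM F) {N : ℕ}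
    (hN : N ≠ 0) :
    ∫ x, (av R N F x - (lam[F | invSigma R]) x) ^ 2 ∂lam =
      ∫ x, (av R N F x) ^ 2 ∂lam - QQ lam R F F := by
  obtain ⟨g, hg, hgm, hgae, hgR⟩ := exists_ce lam R hF
  have hA := hF.av hR.measurable N
  have e1 : ∫ x, (av R N F x - (lam[F | invSigma R]) x) ^ 2 ∂lam =
      ∫ x, ((av R N F x) ^ 2 - 2 * (av R N F x * g x)) + g x * g x ∂lam := by
    apply integral_congr_ae
    filter_upwards [hgae] with x hx
    rw [hx]; ring
  have e2 : QQ lam R F F = ∫ x, g x * g x ∂lam := by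
    apply integral_congr_ae
    filter_upwards [hgae] with x hx
    rw [hx]
  have e3 : QQ lam R F F = ∫ x, F x * g x ∂lam := by
    rw [QQ_eq_left hF hF]
    apply integral_congr_ae
    filter_upwards [hgae] with x hx
    rw [hx]
  rw [e1, integral_add, integral_sub, integral_const_mul, integral_av_mul_inv hR hF hg hgR hN, ← e2,
    ← e3]
  · ring
  · exact hA.sq.int lam
  · exact ((hA.mul hg).int lam).const_mul 2
  · exact ((hA.sq).sub ((BM.const 2).mul (hA.mul hg))).int lam
  · exact (hg.mul hg).int lam

theorem QQ_le_av (hR : MeasurePreserving R lam lam) {F : Y → ℝ} (hF : BM F) {N : ℕ}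
    (hN : N ≠ 0) : QQ lam R F F ≤ ∫ x, (av R N F x) ^ 2 ∂lam := by
  have h := integral_av_sq_sub hR hF hN
  have : 0 ≤ ∫ x, (av R N F x - (lam[F | invSigma R]) x) ^ 2 ∂lam :=
    integral_nonneg fun x => sq_nonneg _
  linarith

theorem av_sq_tendsto (hR : MeasurePreserving R lam lam) {F : Y → ℝ} (hF : BM F) :
    Tendsto (fun N => ∫ x, (av R N F x) ^ 2 ∂lam) atTop (nhds (QQ lam R F F)) := by
  have h := (mean_ergodic hR hF).add_const (QQ lam R F F)
  rw [zero_add] at h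
  refine h.congr' ?_
  filter_upwards [eventually_ne_atTop 0] with N hN
  rw [integral_av_sq_sub hR hF hN]; ring

theorem cs_sq {a b : Y → ℝ} (ha : BM a) (hb : BM b) :
    (∫ x, a x * b x ∂lam) ^ 2 ≤ (∫ x, (a x) ^ 2 ∂lam) * ∫ x, (b x) ^ 2 ∂lam := by
  have h := real_inner_mul_inner_self_le ((ha.memLp lam 2).toLp _) ((hb.memLp lam 2).toLp _)
  rw [inner_toLp ha hb, inner_toLp ha ha, inner_toLp hb hb] at h
  simpa only [pow_two] using h

theorem av_mul_tendsto (hR : MeasurePreserving R lam lam) {a b : Y → ℝ} (ha : BM a) (hb : BM b) :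
    Tendsto (fun N => ∫ x, av R N a x * b x ∂lam) atTop (nhds (QQ lam R a b)) := by
  obtain ⟨g, hg, hgm, hgae, hgR⟩ := exists_ce lam R ha
  have e : QQ lam R a b = ∫ x, g x * b x ∂lam := by
    rw [QQ_comm, QQ_eq_left hb ha]
    apply integral_congr_ae
    filter_upwards [hgae] with x hx
    rw [hx]; ring
  rw [e, tendsto_iff_norm_sub_tendsto_zero]
  have h0 : Tendsto (fun N => Real.sqrt ((∫ x, (av R N a x - (lam[a | invSigma R]) x) ^ 2 ∂lam) *
      ∫ x, (b x) ^ 2 ∂lam)) atTop (nhds 0) := by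
    have := ((mean_ergodic hR ha).mul_const (∫ x, (b x) ^ 2 ∂lam)).sqrt
    simpa using this
  refine squeeze_zero (fun _ => norm_nonneg _) (fun N => ?_) h0
  have hA := ha.av hR.measurable N
  rw [← integral_sub ((hA.mul hb).int lam) ((hg.mul hb).int lam)]
  have e1 : ∫ x, (av R N a x - (lam[a | invSigma R]) x) ^ 2 ∂lam =
      ∫ x, (av R N a x - g x) ^ 2 ∂lam := by
    apply integral_congr_ae
    filter_upwards [hgae] with x hx
    rw [hx]
  rw [e1]
  have := cs_sq (lam := lam) (hA.sub hg) hb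
  simp only [← sub_mul]
  exact Real.abs_le_sqrt this

theorem av_comp {V : Y → Y} (hc : ∀ x, V (R x) = R (V x)) (N : ℕ) (a : Y → ℝ) (x : Y) :
    av R N (fun y => a (V y)) x = av R N a (V x) := by
  have : ∀ n, V (R^[n] x) = R^[n] (V x) := fun n => by
    have h : Function.Semiconj V R R := hc
    exact (h.iterate_right n) x
  simp only [av, this]

/-- Invariance of `QQ` under automorphisms. -/
theorem QQ_comp (hR : MeasurePreserving R lam lam) {V : Y → Y} (hV : MeasurePreserving V lam lam)
    (hc : ∀ x, V (R x) = R (V x)) {a b : Y → ℝ} (ha : BM a) (hb : BM b) :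
    QQ lam R (fun x => a (V x)) (fun x => b (V x)) = QQ lam R a b := by
  refine tendsto_nhds_unique
    (av_mul_tendsto hR (ha.comp hV.measurable) (hb.comp hV.measurable)) ?_
  refine (av_mul_tendsto hR ha hb).congr fun N => ?_
  rw [← integral_comp_mp hV ((ha.av hR.measurable N).mul hb).1]
  simp only [av_comp hc]

end meanErgodic

section relsq
variable {Y : Type*} [mY : MeasurableSpace Y]

/-- `lam1` is the relatively independent square of `lam` over the `R`-invariant sets. -/
def RelSq (lam : Measure Y) (R : Y → Y) (lam1 : Measure (Y × Y)) : Prop :=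
  ∀ a b : Y → ℝ, BM a → BM b → ∫ p, a p.1 * b p.2 ∂lam1 = QQ lam R a b

/-- The diagonal map on the square. -/
def dbl (R : Y → Y) : Y × Y → Y × Y := fun p => (R p.1, R p.2)

theorem dbl_iter (R : Y → Y) (n : ℕ) (p : Y × Y) : (dbl R)^[n] p = (R^[n] p.1, R^[n] p.2) := by
  induction n with
  | zero => rfl
  | succ n ih =>
    rw [Function.iterate_succ_apply', ih, Function.iterate_succ_apply', Function.iterate_succ_apply']
    rfl

theorem BM.tensor {a b : Y → ℝ} (ha : BM a) (hb : BM b) :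
    BM (fun p : Y × Y => a p.1 * b p.2) :=
  (ha.comp measurable_fst).mul (hb.comp measurable_snd)

variable {lam : Measure Y} [IsProbabilityMeasure lam] {R : Y → Y} {lam1 : Measure (Y × Y)}

theorem RelSq.prob (h : RelSq lam R lam1) : IsProbabilityMeasure lam1 := by
  have h1 := h (fun _ => 1) (fun _ => 1) (BM.const 1) (BM.const 1)
  rw [QQ, condExp_const (invSigma_le R)] at h1
  simp [Measure.real] at h1
  refine ⟨?_⟩
  rw [← ENNReal.toReal_eq_one_iff]
  exact h1

theorem mp_of_tensor [IsProbabilityMeasure lam1] {v w : Y → Y} (hv : Measurable v)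
    (hw : Measurable w)
    (h : ∀ a b : Y → ℝ, BM a → BM b →
      ∫ p, a (v p.1) * b (w p.2) ∂lam1 = ∫ p, a p.1 * b p.2 ∂lam1) :
    MeasurePreserving (fun p : Y × Y => (v p.1, w p.2)) lam1 lam1 := by
  have hm : Measurable (fun p : Y × Y => (v p.1, w p.2)) := by fun_prop
  refine ⟨hm, ?_⟩
  have := Measure.isProbabilityMeasure_map (μ := lam1) hm.aemeasurable
  refine Measure.ext_prod fun {s t} hs ht => ?_
  have h1 := h _ _ (BM.indicator hs) (BM.indicator ht)
  have e1 : ∀ p : Y × Y, s.indicator (fun _ => (1:ℝ)) p.1 * t.indicator (fun _ => (1:ℝ)) p.2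
      = (s ×ˢ t).indicator (fun _ => (1:ℝ)) p := by
    intro p
    by_cases h1 : p.1 ∈ s <;> by_cases h2 : p.2 ∈ t <;> simp [Set.indicator, h1, h2]
  have e2 : ∀ p : Y × Y, s.indicator (fun _ => (1:ℝ)) (v p.1) * t.indicator (fun _ => (1:ℝ)) (w p.2)
      = ((fun p : Y × Y => (v p.1, w p.2)) ⁻¹' (s ×ˢ t)).indicator (fun _ => (1:ℝ)) p := by
    intro p
    exact e1 (v p.1, w p.2)
  simp only [e1, e2] at h1
  have hst : MeasurableSet (s ×ˢ t) := hs.prod ht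
  rw [integral_indicator_const _ hst, integral_indicator_const _ (hm hst)] at h1
  rw [Measure.map_apply hm hst]
  simpa [Measure.real, ENNReal.toReal_eq_toReal_iff'] using h1

theorem RelSq.mp (h : RelSq lam R lam1) (hR : MeasurePreserving R lam lam) {V : Y → Y}
    (hV : MeasurePreserving V lam lam) (hc : ∀ x, V (R x) = R (V x)) :
    MeasurePreserving (dbl V) lam1 lam1 := by
  have := h.prob
  refine mp_of_tensor hV.measurable hV.measurable fun a b ha hb => ?_
  rw [h a b ha hb]
  have := h _ _ (ha.comp hV.measurable) (hb.comp hV.measurable)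
  rw [this, QQ_comp hR hV hc ha hb]

/-- Functions orthogonal to tensors vanish. -/
theorem ae_zero_of_tensor [IsProbabilityMeasure lam1] {h : Y × Y → ℝ} (hi : Integrable h lam1)
    (H : ∀ a b : Y → ℝ, BM a → BM b → ∫ p, h p * (a p.1 * b p.2) ∂lam1 = 0) :
    h =ᵐ[lam1] 0 := by
  refine hi.ae_eq_zero_of_forall_setIntegral_eq_zero fun s hs _ => ?_
  have hr : ∀ s : Set Y, ∀ t : Set Y, MeasurableSet s → MeasurableSet t →
      ∫ p in s ×ˢ t, h p ∂lam1 = 0 := by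
    intro s t hs ht
    rw [← H _ _ (BM.indicator hs) (BM.indicator ht), ← integral_indicator (hs.prod ht)]
    congr 1
    ext p
    by_cases h1 : p.1 ∈ s <;> by_cases h2 : p.2 ∈ t <;> simp [Set.indicator, h1, h2]
  induction s, hs using MeasurableSpace.induction_on_inter generateFrom_prod.symm isPiSystem_prod with
  | empty => simp
  | basic u hu =>
    obtain ⟨s, hs, t, ht, rfl⟩ := hu
    exact hr s t hs ht
  | compl t ht ih =>
    have h0 := hr _ _ MeasurableSet.univ MeasurableSet.univ
    rw [Set.univ_prod_univ, setIntegral_univ] at h0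
    have := integral_add_compl ht hi
    have ih' := ih (measure_lt_top _ _)
    linarith
  | iUnion f hd hm ih =>
    rw [integral_iUnion hm hd hi.integrableOn]
    simp [fun i => ih i (measure_lt_top _ _)]

/-- The four-fold form. -/
noncomputable def AA (lam1 : Measure (Y × Y)) (R : Y → Y) (a b c d : Y → ℝ) : ℝ :=
  QQ lam1 (dbl R) (fun p => a p.1 * b p.2) (fun p => c p.1 * d p.2)

theorem QQ_add_left {a a' b : Y → ℝ} (ha : BM a) (ha' : BM a') (hb : BM b) :
    QQ lam R (fun x => a x + a' x) b = QQ lam R a b + QQ lam R a' b := by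
  obtain ⟨g, hg, hgm, hgae, -⟩ := exists_ce lam R hb
  have e : ∀ {f : Y → ℝ}, BM f → QQ lam R f b = ∫ x, f x * g x ∂lam := by
    intro f hf
    rw [QQ_eq_left hf hb]
    apply integral_congr_ae
    filter_upwards [hgae] with x hx
    rw [hx]
  rw [e (ha.add ha'), e ha, e ha', ← integral_add ((ha.mul hg).int lam) ((ha'.mul hg).int lam)]
  simp only [add_mul]

theorem QQ_add_right {a a' b : Y → ℝ} (ha : BM a) (ha' : BM a') (hb : BM b) :
    QQ lam R b (fun x => a x + a' x) = QQ lam R b a + QQ lam R b a' := by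
  rw [QQ_comm, QQ_add_left ha ha' hb, QQ_comm, QQ_comm a']

theorem QQ_smul_left {a b : Y → ℝ} (ha : BM a) (hb : BM b) (t : ℝ) :
    QQ lam R (fun x => t * a x) b = t * QQ lam R a b := by
  rw [QQ_eq_left ((BM.const t).mul ha) hb, QQ_eq_left ha hb, ← integral_const_mul]
  simp only [mul_assoc]

theorem AA_comm (a b c d : Y → ℝ) : AA lam1 R a b c d = AA lam1 R c d a b := by
  simp only [AA, QQ]
  congr 1
  ext p
  ring

theorem AA_tendsto (h : RelSq lam R lam1) (hR : MeasurePreserving R lam lam)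
    {a b c d : Y → ℝ} (ha : BM a) (hb : BM b) (hc : BM c) (hd : BM d) :
    Tendsto (fun N : ℕ => (N : ℝ)⁻¹ * ∑ n ∈ Finset.range N,
      QQ lam R (fun x => a (R^[n] x) * c x) (fun x => b (R^[n] x) * d x)) atTop
      (nhds (AA lam1 R a b c d)) := by
  have := h.prob
  have hR1 : MeasurePreserving (dbl R) lam1 lam1 := h.mp hR hR fun _ => rfl
  refine (av_mul_tendsto hR1 (ha.tensor hb) (hc.tensor hd)).congr fun N => ?_
  rw [integral_av_mul hR1.measurable (ha.tensor hb) (hc.tensor hd)]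
  congr 1
  refine Finset.sum_congr rfl fun n _ => ?_
  rw [← h _ _ ((ha.comp (hR.measurable.iterate n)).mul hc)
    ((hb.comp (hR.measurable.iterate n)).mul hd)]
  congr 1
  ext p
  rw [dbl_iter]
  ring

theorem AA_swap (h : RelSq lam R lam1) (hR : MeasurePreserving R lam lam)
    {a b c d : Y → ℝ} (ha : BM a) (hb : BM b) (hc : BM c) (hd : BM d) :
    AA lam1 R a b c d = AA lam1 R b a d c := by
  refine tendsto_nhds_unique (AA_tendsto h hR ha hb hc hd) ?_
  refine (AA_tendsto h hR hb ha hd hc).congr fun N => ?_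
  simp only [QQ_comm (lam := lam)]

theorem AA_smul1 (h : RelSq lam R lam1) {a b c d : Y → ℝ} (ha : BM a) (hb : BM b) (hc : BM c)
    (hd : BM d) (t : ℝ) : AA lam1 R (fun x => t * a x) b c d = t * AA lam1 R a b c d := by
  have := h.prob
  rw [AA, AA, ← QQ_smul_left (ha.tensor hb) (hc.tensor hd)]
  simp only [mul_assoc]

theorem AA_smul2 (h : RelSq lam R lam1) {a b c d : Y → ℝ} (ha : BM a) (hb : BM b) (hc : BM c)
    (hd : BM d) (t : ℝ) : AA lam1 R a (fun x => t * b x) c d = t * AA lam1 R a b c d := by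
  have := h.prob
  rw [AA, AA, ← QQ_smul_left (ha.tensor hb) (hc.tensor hd)]
  congr 1
  ext p
  ring

/-- `G` is well approximated along graphs. -/
def Cv (lam : Measure Y) (R : Y → Y) (lam1 : Measure (Y × Y)) (G : Y × Y → ℝ) : Prop :=
  BM G ∧ Tendsto (fun N : ℕ => (N : ℝ)⁻¹ * ∑ n ∈ Finset.range N, ∫ x, G (x, R^[n] x) ∂lam)
    atTop (nhds (∫ p, G p ∂lam1))

theorem Cv.tensor (h : RelSq lam R lam1) (hR : MeasurePreserving R lam lam)
    {a b : Y → ℝ} (ha : BM a) (hb : BM b) : Cv lam R lam1 (fun p => a p.1 * b p.2) := by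
  refine ⟨ha.tensor hb, ?_⟩
  rw [h a b ha hb, QQ_comm]
  refine (av_mul_tendsto hR hb ha).congr fun N => ?_
  rw [integral_av_mul hR.measurable hb ha]
  simp only [mul_comm]

theorem Cv.add (h : RelSq lam R lam1) (hR : MeasurePreserving R lam lam) {G G' : Y × Y → ℝ}
    (hG : Cv lam R lam1 G) (hG' : Cv lam R lam1 G') :
    Cv lam R lam1 (fun p => G p + G' p) := by
  have := h.prob
  refine ⟨hG.1.add hG'.1, ?_⟩
  rw [integral_add (hG.1.int lam1) (hG'.1.int lam1)]
  refine (hG.2.add hG'.2).congr fun N => ?_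
  rw [← mul_add, ← Finset.sum_add_distrib]
  congr 1
  refine Finset.sum_congr rfl fun n _ => ?_
  have hm : Measurable (fun x => (x, R^[n] x)) := measurable_id.prodMk (hR.measurable.iterate n)
  rw [integral_add ((hG.1.comp hm).int lam) ((hG'.1.comp hm).int lam)]

theorem Cv.smul {G : Y × Y → ℝ} (hG : Cv lam R lam1 G) (t : ℝ) :
    Cv lam R lam1 (fun p => t * G p) := by
  refine ⟨(BM.const t).mul hG.1, ?_⟩
  rw [integral_const_mul]
  refine (hG.2.const_mul t).congr fun N => ?_
  simp only [integral_const_mul, ← Finset.mul_sum]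
  ring

theorem Cv.sum (h : RelSq lam R lam1) (hR : MeasurePreserving R lam lam) {ι : Type*}
    (s : Finset ι) {G : ι → Y × Y → ℝ} (hG : ∀ i, Cv lam R lam1 (G i)) :
    Cv lam R lam1 (fun p => ∑ i ∈ s, G i p) := by
  classical
  induction s using Finset.induction_on with
  | empty => exact ⟨by simpa using BM.const 0, by simp⟩
  | insert a s ha ih => simpa [Finset.sum_insert ha] using (hG a).add h hR ih

/-- The key inequality. -/
theorem AA_ineq (h : RelSq lam R lam1) (hR : MeasurePreserving R lam lam)
    {c d c' d' : Y → ℝ} (hc : BM c) (hd : BM d) (hc' : BM c') (hd' : BM d') :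
    AA lam1 R c c d d + AA lam1 R c c' d d' + AA lam1 R c' c d' d + AA lam1 R c' c' d' d' ≤
    AA lam1 R c d c d + AA lam1 R c d c' d' + AA lam1 R c' d' c d + AA lam1 R c' d' c' d' := by
  have := h.prob
  have hR1 : MeasurePreserving (dbl R) lam1 lam1 := h.mp hR hR fun _ => rfl
  set F : Y × Y → ℝ := fun p => c p.1 * d p.2 + c' p.1 * d' p.2 with hFdef
  have hF : BM F := (hc.tensor hd).add (hc'.tensor hd')
  have hrhs : QQ lam1 (dbl R) F F =
    AA lam1 R c d c d + AA lam1 R c d c' d' + AA lam1 R c' d' c d + AA lam1 R c' d' c' d' := by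
    rw [hFdef, QQ_add_left (hc.tensor hd) (hc'.tensor hd') hF,
      QQ_add_right (hc.tensor hd) (hc'.tensor hd') (hc.tensor hd),
      QQ_add_right (hc.tensor hd) (hc'.tensor hd') (hc'.tensor hd')]
    simp only [AA]
    ring
  rw [← hrhs]
  refine ge_of_tendsto (av_sq_tendsto hR1 hF) ?_
  filter_upwards [eventually_ne_atTop 0] with M hM
  let Fn : ℕ → Y → ℝ := fun n x => F (x, R^[n] x)
  have hit : ∀ n, Measurable (R^[n]) := fun n => hR.measurable.iterate n
  have hFn : ∀ n, BM (Fn n) := fun n => hF.comp (measurable_id.prodMk (hit n))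
  -- limit of the right-hand sides
  have hcv : Cv lam R lam1 (fun p => (av (dbl R) M F p) ^ 2) := by
    have e : (fun p => (av (dbl R) M F p) ^ 2) = fun p => ((M : ℝ)⁻¹ ^ 2) *
        ∑ m ∈ Finset.range M, ∑ m' ∈ Finset.range M,
          ((((c (R^[m] p.1) * c (R^[m'] p.1)) * (d (R^[m] p.2) * d (R^[m'] p.2))) +
          ((c (R^[m] p.1) * c' (R^[m'] p.1)) * (d (R^[m] p.2) * d' (R^[m'] p.2)))) +
          (((c' (R^[m] p.1) * c (R^[m'] p.1)) * (d' (R^[m] p.2) * d (R^[m'] p.2))) +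
          ((c' (R^[m] p.1) * c' (R^[m'] p.1)) * (d' (R^[m] p.2) * d' (R^[m'] p.2))))) := by
      ext p
      simp only [av, mul_pow]
      rw [pow_two (∑ n ∈ Finset.range M, F ((dbl R)^[n] p)), Finset.sum_mul_sum]
      congr 1
      refine Finset.sum_congr rfl fun m _ => Finset.sum_congr rfl fun m' _ => ?_
      simp only [hFdef, dbl_iter]
      ring
    rw [e]
    refine Cv.smul (Cv.sum h hR _ fun m => Cv.sum h hR _ fun m' => ?_) _
    have t : ∀ {a b u v : Y → ℝ}, BM a → BM b → BM u → BM v → Cv lam R lam1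
        (fun p => (a (R^[m] p.1) * b (R^[m'] p.1)) * (u (R^[m] p.2) * v (R^[m'] p.2))) := by
      intro a b u v ha hb hu hv
      exact Cv.tensor h hR ((ha.comp (hit m)).mul (hb.comp (hit m')))
        ((hu.comp (hit m)).mul (hv.comp (hit m')))
    exact Cv.add h hR (Cv.add h hR (t hc hc hd hd) (t hc hc' hd hd'))
      (Cv.add h hR (t hc' hc hd' hd) (t hc' hc' hd' hd'))
  have hl := (((AA_tendsto h hR hd hd hc hc).add (AA_tendsto h hR hd hd' hc hc')).add
    (AA_tendsto h hR hd' hd hc' hc)).add (AA_tendsto h hR hd' hd' hc' hc')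
  rw [AA_comm d, AA_comm d, AA_comm d', AA_comm d'] at hl
  refine le_of_tendsto_of_tendsto' hl hcv.2 fun N => ?_
  rw [← mul_add, ← mul_add, ← mul_add, ← Finset.sum_add_distrib, ← Finset.sum_add_distrib,
    ← Finset.sum_add_distrib]
  refine mul_le_mul_of_nonneg_left (Finset.sum_le_sum fun n _ => ?_) (by positivity)
  have h1 := QQ_le_av hR (hFn n) hM
  have e1 : ∀ x, av R M (Fn n) x = av (dbl R) M F (x, R^[n] x) := by
    intro x
    simp only [av, Fn, dbl_iter]
    congr 1
    refine Finset.sum_congr rfl fun m _ => ?_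
    rw [← Function.iterate_add_apply, ← Function.iterate_add_apply, add_comm]
  simp only [e1] at h1
  refine le_trans (le_of_eq ?_) h1
  have b1 : BM (fun x => d (R^[n] x) * c x) := (hd.comp (hit n)).mul hc
  have b2 : BM (fun x => d' (R^[n] x) * c' x) := (hd'.comp (hit n)).mul hc'
  have e2 : Fn n = fun x => d (R^[n] x) * c x + d' (R^[n] x) * c' x := by
    ext x
    simp only [Fn, hFdef]
    ring
  rw [e2, QQ_add_left b1 b2 (b1.add b2), QQ_add_right b1 b2 b1, QQ_add_right b1 b2 b2]
  ring

theorem quad_zero {X D : ℝ} (h : ∀ t : ℝ, 0 ≤ t * X + t ^ 2 * D) : X = 0 := by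
  have h1 : 0 ≤ D := by have := h 1; have := h (-1); linarith
  by_contra hX
  have h2 := h (-X / (D + 1))
  have h3 : -X / (D + 1) * X + (-X / (D + 1)) ^ 2 * D = - X ^ 2 / (D + 1) ^ 2 := by
    field_simp
    ring
  rw [h3] at h2
  have : 0 < X ^ 2 / (D + 1) ^ 2 := by positivity
  rw [neg_div] at h2
  linarith

theorem AA_diag (h : RelSq lam R lam1) (hR : MeasurePreserving R lam lam)
    {c d : Y → ℝ} (hc : BM c) (hd : BM d) : AA lam1 R c c d d = AA lam1 R c d c d := by
  have z : BM (fun _ : Y => (0:ℝ)) := BM.const 0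
  have single : ∀ {c d : Y → ℝ}, BM c → BM d → AA lam1 R c c d d ≤ AA lam1 R c d c d := by
    intro c d hc hd
    have h1 := AA_ineq h hR hc hd hc hd
    linarith
  have hX : 2 * AA lam1 R c c d d - AA lam1 R c d c d - AA lam1 R d c d c = 0 := by
    refine quad_zero (D := 0) fun t => ?_
    have h1 := AA_ineq h hR hc hc ((BM.const t).mul hd) hd
    have htd := (BM.const t).mul hd
    rw [AA_smul1 h hd hc hd hc, AA_smul2 h hc hd hc hd, AA_smul1 h hd htd hd hd,
      AA_smul2 h hd hd hd hd, AA_smul1 h hd hd hc hc, AA_smul1 h hd hd htd hd,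
      AA_comm c c (fun x => t * d x), AA_smul1 h hd hd hc hc, AA_comm d d (fun x => t * d x),
      AA_smul1 h hd hd hd hd, AA_comm d d c c] at h1
    linarith
  have h1 := single hc hd
  have h2 := single hd hc
  rw [AA_comm d d c c] at h2
  linarith

theorem AA_symm (h : RelSq lam R lam1) (hR : MeasurePreserving R lam lam)
    {a b c d : Y → ℝ} (ha : BM a) (hb : BM b) (hc : BM c) (hd : BM d) :
    AA lam1 R a b c d = AA lam1 R a c b d := by
  have hX : 2 * AA lam1 R a b c d - 2 * AA lam1 R a c b d = 0 := by
    refine quad_zero (D := 0) fun t => ?_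
    have htc := (BM.const t).mul hc
    have h1 := AA_ineq h hR ha hb htc hd
    have e1 : AA lam1 R a b (fun x => t * c x) d = t * AA lam1 R a b c d := by
      rw [AA_comm, AA_smul1 h hc hd ha hb, AA_comm]
    have e2 : AA lam1 R (fun x => t * c x) d a b = t * AA lam1 R a b c d := by
      rw [AA_smul1 h hc hd ha hb, AA_comm]
    rw [AA_diag h hR ha hb, AA_diag h hR htc hd, ← AA_swap h hR ha htc hb hd,
      AA_smul2 h ha hc hb hd, e1, e2] at h1
    linarith
  linarith

end relsq

section invby
variable {Y : Type*} [mY : MeasurableSpace Y]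

/-- `R`-invariant functions are `s`-invariant. -/
def InvBy (lam : Measure Y) (R s : Y → Y) : Prop :=
  ∀ G : Y → ℝ, BM G → (fun x => (lam[G | invSigma R]) (s x)) =ᵐ[lam] lam[G | invSigma R]

variable {lam : Measure Y} [IsProbabilityMeasure lam] {R s : Y → Y} {lam1 : Measure (Y × Y)}

theorem QQ_right_eq {a b g : Y → ℝ} (ha : BM a) (hb : BM b)
    (hg : lam[a | invSigma R] =ᵐ[lam] g) : QQ lam R a b = ∫ x, g x * b x ∂lam := by
  rw [QQ_comm, QQ_eq_left hb ha]
  apply integral_congr_ae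
  filter_upwards [hg] with x hx
  rw [hx]; ring

theorem InvBy.rep (I : InvBy lam R s) (hs : MeasurePreserving s lam lam) {a g : Y → ℝ} (ha : BM a)
    (hg : lam[a | invSigma R] =ᵐ[lam] g) : (fun x => g (s x)) =ᵐ[lam] g := by
  have h1 := hs.quasiMeasurePreserving.ae hg
  filter_upwards [h1, I a ha, hg] with x h1 h2 h3
  rw [← h1, h2, h3]

theorem InvBy.face (I : InvBy lam R s) (h : RelSq lam R lam1) (hs : MeasurePreserving s lam lam) :
    MeasurePreserving (fun p : Y × Y => (p.1, s p.2)) lam1 lam1 := by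
  have := h.prob
  refine mp_of_tensor (v := id) measurable_id hs.measurable fun a b ha hb => ?_
  obtain ⟨g, hg, hgm, hgae, -⟩ := exists_ce lam R ha
  have h1 := h _ _ ha (hb.comp hs.measurable)
  simp only [id]
  rw [h1, h a b ha hb, QQ_right_eq ha hb hgae, QQ_right_eq ha (hb.comp hs.measurable) hgae,
    ← integral_comp_mp hs (hg.mul hb).1]
  apply integral_congr_ae
  filter_upwards [I.rep hs ha hgae] with x hx
  rw [hx]

theorem InvBy.step (I : InvBy lam R s) (h : RelSq lam R lam1) (hR : MeasurePreserving R lam lam)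
    (hs : MeasurePreserving s lam lam) (hc : ∀ x, s (R x) = R (s x)) {sinv : Y → Y}
    (hsm : Measurable sinv) (hsi : ∀ x, sinv (s x) = x) : InvBy lam1 (dbl R) (dbl s) := by
  have := h.prob
  have hR1 : MeasurePreserving (dbl R) lam1 lam1 := h.mp hR hR fun _ => rfl
  have hs1 : MeasurePreserving (dbl s) lam1 lam1 := h.mp hR hs hc
  have hV := I.face h hs
  have hVc : ∀ p : Y × Y, (fun p : Y × Y => (p.1, s p.2)) (dbl R p) =
      dbl R ((fun p : Y × Y => (p.1, s p.2)) p) := by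
    intro p
    simp [dbl, hc]
  have f1 : ∀ {a b c d : Y → ℝ}, BM a → BM b → BM c → BM d →
      AA lam1 R a (fun x => b (s x)) c (fun x => d (s x)) = AA lam1 R a b c d := by
    intro a b c d ha hb hc hd
    exact QQ_comp hR1 hV hVc (ha.tensor hb) (hc.tensor hd)
  have f2 : ∀ {a b c d : Y → ℝ}, BM a → BM b → BM c → BM d →
      AA lam1 R a b (fun x => c (s x)) (fun x => d (s x)) = AA lam1 R a b c d := by
    intro a b c d ha hb hc hd
    have hcs := hc.comp hs.measurable
    have hds := hd.comp hs.measurable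
    rw [AA_symm h hR ha hb hcs hds, f1 ha hc hb hd, AA_symm h hR ha hc hb hd]
  have f3 : ∀ {c d : Y → ℝ}, BM c → BM d →
      lam1[(fun p => c (s p.1) * d (s p.2)) | invSigma (dbl R)] =ᵐ[lam1]
        lam1[(fun p => c p.1 * d p.2) | invSigma (dbl R)] := by
    intro c d hc hd
    have hcs := hc.comp hs.measurable
    have hds := hd.comp hs.measurable
    obtain ⟨g, hg, -, hgae, -⟩ := exists_ce lam1 (dbl R) (hcs.tensor hds)
    obtain ⟨g', hg', -, hgae', -⟩ := exists_ce lam1 (dbl R) (hc.tensor hd)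
    have hz : (fun p => g p - g' p) =ᵐ[lam1] 0 := by
      refine ae_zero_of_tensor ((hg.sub hg').int lam1) fun a b ha hb => ?_
      have h1 := f2 ha hb hc hd
      rw [AA_comm, AA_comm a b, AA, AA, QQ_right_eq (hcs.tensor hds) (ha.tensor hb) hgae,
        QQ_right_eq (hc.tensor hd) (ha.tensor hb) hgae'] at h1
      simp only [sub_mul]
      rw [integral_sub ((hg.mul (ha.tensor hb)).int lam1) ((hg'.mul (ha.tensor hb)).int lam1), h1,
        sub_self]
    filter_upwards [hz, hgae, hgae'] with p h1 h2 h3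
    rw [h2, h3]
    simpa [sub_eq_zero] using h1
  intro G hG
  obtain ⟨g, hg, -, hgae, -⟩ := exists_ce lam1 (dbl R) hG
  have hgs := hg.comp hs1.measurable
  have hz : (fun p => g (dbl s p) - g p) =ᵐ[lam1] 0 := by
    refine ae_zero_of_tensor ((hgs.sub hg).int lam1) fun a b ha hb => ?_
    have hc := ha.comp hsm
    have hd := hb.comp hsm
    have h1 : QQ lam1 (dbl R) G (fun p => a (sinv (s p.1)) * b (sinv (s p.2))) =
        QQ lam1 (dbl R) G (fun p => a (sinv p.1) * b (sinv p.2)) := by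
      apply integral_congr_ae
      filter_upwards [f3 hc hd] with p hp
      rw [hp]
    simp only [hsi] at h1
    rw [QQ_right_eq hG (ha.tensor hb) hgae, QQ_right_eq hG (hc.tensor hd) hgae,
      ← integral_comp_mp hs1 (hg.mul (hc.tensor hd)).1] at h1
    simp only [dbl, hsi] at h1
    simp only [sub_mul]
    rw [integral_sub ((hgs.mul (ha.tensor hb)).int lam1) ((hg.mul (ha.tensor hb)).int lam1), h1]
    exact sub_self _
  have h2 := hs1.quasiMeasurePreserving.ae hgae
  filter_upwards [hz, hgae, h2] with p h1 h2 h3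
  rw [h3, h2]
  simpa [sub_eq_zero] using h1

theorem InvBy.base (hR : Ergodic R lam) (hs : MeasurePreserving s lam lam) : InvBy lam R s := by
  intro G hG
  obtain ⟨g, hg, -, hgae, hgR⟩ := exists_ce lam R hG
  obtain ⟨c, hc⟩ := hR.toPreErgodic.ae_eq_const_of_ae_eq_comp hg.1 (funext hgR)
  have h1 : lam[G | invSigma R] =ᵐ[lam] Function.const _ c := hgae.trans hc
  filter_upwards [h1, hs.quasiMeasurePreserving.ae h1] with x h2 h3
  rw [h2, h3]
  rfl

theorem ce_eq_of_invBy (hR : MeasurePreserving R lam lam) (hs : MeasurePreserving s lam lam)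
    (I : InvBy lam R s) (J : InvBy lam s R) {F : Y → ℝ} (hF : BM F) :
    lam[F | invSigma R] =ᵐ[lam] lam[F | invSigma s] := by
  obtain ⟨g, hg, -, hgae, -⟩ := exists_ce lam R hF
  obtain ⟨k, hk, -, hkae, -⟩ := exists_ce lam s hF
  have hgs := aesm_of_ae_inv hs hg.1 (I.rep hs hF hgae)
  have hkR := aesm_of_ae_inv hR hk.1 (J.rep hR hF hkae)
  have e1 : lam[g | invSigma s] =ᵐ[lam] g :=
    condExp_of_aestronglyMeasurable' (invSigma_le s) hgs (hg.int lam)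
  have e2 : lam[k | invSigma R] =ᵐ[lam] k :=
    condExp_of_aestronglyMeasurable' (invSigma_le R) hkR (hk.int lam)
  -- all products agree
  have p1 : QQ lam R F k = ∫ x, g x * k x ∂lam := QQ_right_eq hF hk hgae
  have p2 : QQ lam R F k = ∫ x, k x * F x ∂lam := by
    rw [QQ_comm]; exact QQ_right_eq hk hF e2
  have p3 : QQ lam s F g = ∫ x, k x * g x ∂lam := QQ_right_eq hF hg hkae
  have p4 : QQ lam s F g = ∫ x, g x * F x ∂lam := by
    rw [QQ_comm]; exact QQ_right_eq hg hF e1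
  have p5 : QQ lam R F F = ∫ x, g x * F x ∂lam := QQ_right_eq hF hF hgae
  have p6 : QQ lam s F F = ∫ x, k x * F x ∂lam := QQ_right_eq hF hF hkae
  have p7 : QQ lam R F F = ∫ x, g x * g x ∂lam := by
    apply integral_congr_ae
    filter_upwards [hgae] with x hx
    rw [hx]
  have p8 : QQ lam s F F = ∫ x, k x * k x ∂lam := by
    apply integral_congr_ae
    filter_upwards [hkae] with x hx
    rw [hx]
  have p9 : ∫ x, g x * k x ∂lam = ∫ x, k x * g x ∂lam := by simp only [mul_comm]
  have hz : ∫ x, (g x - k x) ^ 2 ∂lam = 0 := by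
    have e : ∀ x, (g x - k x) ^ 2 = (g x * g x - 2 * (g x * k x)) + k x * k x := fun x => by ring
    simp only [e]
    rw [integral_add, integral_sub, integral_const_mul]
    · linarith
    · exact (hg.mul hg).int lam
    · exact ((BM.const 2).mul (hg.mul hk)).int lam
    · exact ((hg.mul hg).sub ((BM.const 2).mul (hg.mul hk))).int lam
    · exact (hk.mul hk).int lam
  rw [integral_eq_zero_iff_of_nonneg (fun x => sq_nonneg _) ((hg.sub hk).sq.int lam)] at hz
  filter_upwards [hz, hgae, hkae] with x h1 h2 h3
  rw [h2, h3]
  have h4 : (g x - k x) ^ 2 = 0 := h1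
  have := pow_eq_zero_iff (two_ne_zero) |>.1 h4
  linarith

end invby

section boxes
variable {X : Type*} [mX : MeasurableSpace X] {μ : Measure X} [IsProbabilityMeasure μ]

theorem map_comm {T S : X → X} (hc : ∀ x, S (T x) = T (S x)) (k : ℕ) (p : HKBox X k) :
    HKBox.map S k (HKBox.map T k p) = HKBox.map T k (HKBox.map S k p) := by
  induction k with
  | zero => exact hc p
  | succ k ih => exact Prod.ext (ih p.1) (ih p.2)

theorem box_map_inv {S Sinv : X → X} (hi : ∀ x, Sinv (S x) = x) (k : ℕ) (p : HKBox X k) :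
    HKBox.map Sinv k (HKBox.map S k p) = p := by
  induction k with
  | zero => exact hi p
  | succ k ih => exact Prod.ext (ih p.1) (ih p.2)

theorem map_meas {S : X → X} (hS : Measurable S) (k : ℕ) : Measurable (HKBox.map S k) := by
  induction k with
  | zero => exact hS
  | succ k ih =>
    exact ((ih.comp measurable_fst).prodMk (ih.comp measurable_snd) :
      Measurable (dbl (HKBox.map S k)))

/-- Box measures up to level `n`. -/
def UpTo (μ : Measure X) (T : X → X) (ν : ∀ k, Measure (HKBox X k)) (n : ℕ) : Prop :=
  ν 0 = μ ∧ ∀ k < n, RelSq (ν k) (HKBox.map T k) (ν (k+1))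

theorem upTo_of_seq {T : X → X} {ν : ∀ k, Measure (HKBox X k)} (h : IsHKSeq μ T ν) (n : ℕ) :
    UpTo μ T ν n :=
  ⟨h.1, fun k _ a b ha hb => h.2 k a b ha.1 hb.1 ha.2 hb.2⟩

theorem seq_of_upTo {T : X → X} {ν : ∀ k, Measure (HKBox X k)} (h : ∀ n, UpTo μ T ν n) :
    IsHKSeq μ T ν :=
  ⟨(h 0).1, fun k a b ha hb ha' hb' => (h (k+1)).2 k (Nat.lt_succ_self k) a b ⟨ha, ha'⟩ ⟨hb, hb'⟩⟩

theorem UpTo.basic {T S : X → X} {ν : ∀ k, Measure (HKBox X k)} {n : ℕ} (h : UpTo μ T ν n)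
    (hT : MeasurePreserving T μ μ) (hS : MeasurePreserving S μ μ)
    (hc : ∀ x, S (T x) = T (S x)) : ∀ k ≤ n, IsProbabilityMeasure (ν k) ∧
      MeasurePreserving (HKBox.map T k) (ν k) (ν k) ∧
      MeasurePreserving (HKBox.map S k) (ν k) (ν k) := by
  intro k
  induction k with
  | zero =>
    intro _
    rw [h.1]
    exact ⟨by assumption, hT, hS⟩
  | succ k ih =>
    intro hk
    obtain ⟨h1, h2, h3⟩ := ih (by omega)
    have hr := h.2 k (by omega)
    exact ⟨hr.prob, hr.mp h2 h2 fun _ => rfl, hr.mp h2 h3 (map_comm hc k)⟩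

theorem UpTo.inv {T S Sinv : X → X} {ν : ∀ k, Measure (HKBox X k)} {n : ℕ} (h : UpTo μ T ν n)
    (hT : Ergodic T μ) (hS : MeasurePreserving S μ μ)
    (hc : ∀ x, S (T x) = T (S x)) (hSm : Measurable Sinv) (hSi : ∀ x, Sinv (S x) = x) :
    ∀ k ≤ n, InvBy (ν k) (HKBox.map T k) (HKBox.map S k) := by
  intro k
  induction k with
  | zero =>
    intro _
    rw [h.1]
    exact (show @InvBy X mX μ T S from InvBy.base hT hS)
  | succ k ih =>
    intro hk
    obtain ⟨h1, h2, h3⟩ := h.basic hT.toMeasurePreserving hS hc k (by omega)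
    have hr := h.2 k (by omega)
    exact (ih (by omega)).step hr h2 h3 (map_comm hc k) (map_meas hSm k) (box_map_inv hSi k)

/-- The box measures do not depend on the ergodic transformation in a commuting family. -/
theorem seq_transfer {T S Tinv Sinv : X → X} {ν : ∀ k, Measure (HKBox X k)} (h : IsHKSeq μ T ν)
    (hT : Ergodic T μ) (hS : Ergodic S μ) (hc : ∀ x, S (T x) = T (S x))
    (hTm : Measurable Tinv) (hTi : ∀ x, Tinv (T x) = x)
    (hSm : Measurable Sinv) (hSi : ∀ x, Sinv (S x) = x) : IsHKSeq μ S ν := by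
  apply seq_of_upTo
  intro n
  induction n with
  | zero => exact ⟨h.1, fun k hk => absurd hk (Nat.not_lt_zero k)⟩
  | succ n ih =>
    refine ⟨h.1, fun k hk => ?_⟩
    rcases Nat.lt_succ_iff_lt_or_eq.1 hk with hk | rfl
    · exact ih.2 k hk
    · have hu := upTo_of_seq h (k+1)
      obtain ⟨h1, h2, h3⟩ := hu.basic hT.toMeasurePreserving hS.toMeasurePreserving hc k (by omega)
      have I := hu.inv hT hS.toMeasurePreserving hc hSm hSi k (by omega)
      have J := ih.inv hS hT.toMeasurePreserving (fun x => (hc x).symm) hTm hTi k le_rfl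
      intro a b ha hb
      rw [hu.2 k (by omega) a b ha hb]
      apply integral_congr_ae
      filter_upwards [ce_eq_of_invBy h2 h3 I J ha, ce_eq_of_invBy h2 h3 I J hb] with x e1 e2
      rw [e1, e2]

theorem prodFun_bm {f : X → ℝ} (hf : BM f) (k : ℕ) : BM (HKBox.prodFun f k) := by
  induction k with
  | zero => exact hf
  | succ k ih => exact ih.tensor ih

theorem prodFun_mul (f g : X → ℝ) (k : ℕ) (p : HKBox X k) :
    HKBox.prodFun (fun x => f x * g x) k p = HKBox.prodFun f k p * HKBox.prodFun g k p := by
  induction k with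
  | zero => rfl
  | succ k ih =>
    simp only [HKBox.prodFun, ih]
    ring

theorem prodFun_comp (f : X → ℝ) (T : X → X) (n : ℕ) (k : ℕ) (p : HKBox X k) :
    HKBox.prodFun (fun x => f (T^[n] x)) k p = HKBox.prodFun f k ((HKBox.map T k)^[n] p) := by
  induction k with
  | zero => rfl
  | succ k ih =>
    have : (HKBox.map T (k+1))^[n] p = ((HKBox.map T k)^[n] p.1, (HKBox.map T k)^[n] p.2) :=
      dbl_iter (HKBox.map T k) n p
    rw [this]
    simp only [HKBox.prodFun, ih]

/-- The `2^k`-th power of the seminorm. -/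
noncomputable def II (ν : ∀ k, Measure (HKBox X k)) (k : ℕ) (f : X → ℝ) : ℝ :=
  ∫ x, HKBox.prodFun f k x ∂(ν k)

theorem II_tendsto {T : X → X} {ν : ∀ k, Measure (HKBox X k)} (h : IsHKSeq μ T ν)
    (hT : MeasurePreserving T μ μ) {f : X → ℝ} (hf : BM f) (k : ℕ) :
    Tendsto (fun H : ℕ => ((H : ℝ)⁻¹) ^ 2 * ∑ i ∈ Finset.range H, ∑ j ∈ Finset.range H,
      II ν k (fun x => f (T^[i] x) * f (T^[j] x))) atTop (nhds (II ν (k+1) f)) := by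
  have hu := upTo_of_seq h (k+1)
  obtain ⟨h1, h2, -⟩ := hu.basic hT hT (fun _ => rfl) k (by omega)
  have hb := prodFun_bm hf k
  have e : II ν (k+1) f = QQ (ν k) (HKBox.map T k) (HKBox.prodFun f k) (HKBox.prodFun f k) :=
    hu.2 k (by omega) _ _ hb hb
  rw [e]
  refine (av_sq_tendsto h2 hb).congr fun H => ?_
  have hit := fun n => hb.comp (h2.measurable.iterate n)
  simp only [II, prodFun_mul, prodFun_comp]
  have e2 : ∀ x, av (HKBox.map T k) H (HKBox.prodFun f k) x ^ 2 = ((H : ℝ)⁻¹) ^ 2 *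
      ∑ i ∈ Finset.range H, ∑ j ∈ Finset.range H, HKBox.prodFun f k ((HKBox.map T k)^[i] x) *
        HKBox.prodFun f k ((HKBox.map T k)^[j] x) := by
    intro x
    rw [av, mul_pow, pow_two (∑ n ∈ Finset.range H, _), Finset.sum_mul_sum]
  simp only [e2]
  rw [integral_const_mul, integral_finsetSum]
  · congr 1
    refine Finset.sum_congr rfl fun i _ => ?_
    rw [integral_finsetSum]
    exact fun j _ => ((hit i).mul (hit j)).int _
  · exact fun i _ => (BM.sum _ fun j => (hit i).mul (hit j)).int _

end boxes

section vdc

theorem shift_bound (u : ℕ → ℝ) (hu : ∀ k, |u k| ≤ 1) (N h : ℕ) :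
    |∑ k ∈ Finset.range N, u (k + h) - ∑ k ∈ Finset.range N, u k| ≤ 2 * h := by
  induction h with
  | zero => simp
  | succ h ih =>
    have e : ∑ k ∈ Finset.range N, u (k + (h + 1)) =
        ∑ k ∈ Finset.range N, u (k + h) + u (N + h) - u h := by
      have h1 := Finset.sum_range_succ (fun k => u (k + h)) N
      have h2 := Finset.sum_range_succ' (fun k => u (k + h)) N
      have h3 : ∀ k, k + 1 + h = k + (h + 1) := fun k => by omega
      simp only [h3, Nat.zero_add] at h2
      linarith
    rw [e]
    have h1 := abs_le.1 (hu (N + h))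
    have h2 := abs_le.1 (hu h)
    have h3 := abs_le.1 ih
    push_cast
    rw [abs_le]
    constructor <;> linarith [h1.1, h1.2, h2.1, h2.2, h3.1, h3.2]

theorem abs_avg_le (u : ℕ → ℝ) {c : ℝ} (hc : 0 ≤ c) (hu : ∀ k, |u k| ≤ c) (N : ℕ) :
    |(N : ℝ)⁻¹ * ∑ k ∈ Finset.range N, u k| ≤ c := by
  rcases Nat.eq_zero_or_pos N with rfl | hN
  · simpa using hc
  · rw [abs_mul, abs_of_nonneg (by positivity : (0:ℝ) ≤ (N:ℝ)⁻¹)]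
    calc (N:ℝ)⁻¹ * |∑ k ∈ Finset.range N, u k|
        ≤ (N:ℝ)⁻¹ * ∑ _k ∈ Finset.range N, c := by
          gcongr
          exact (Finset.abs_sum_le_sum_abs _ _).trans (Finset.sum_le_sum fun k _ => hu k)
      _ = c := avg_const hN.ne' c

theorem vdc_num (u : ℕ → ℝ) (hu : ∀ k, |u k| ≤ 1) {H N : ℕ} (hH : H ≠ 0) (hN : N ≠ 0) :
    ((N : ℝ)⁻¹ * ∑ k ∈ Finset.range N, u k) ^ 2 ≤
      ((H : ℝ)⁻¹) ^ 2 * ∑ a ∈ Finset.range H, ∑ b ∈ Finset.range H,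
        ((N : ℝ)⁻¹ * ∑ k ∈ Finset.range N, u (k + a) * u (k + b)) + 4 * H / N := by
  have hN' : (0:ℝ) < N := by exact_mod_cast Nat.pos_of_ne_zero hN
  have hH' : (0:ℝ) < H := by exact_mod_cast Nat.pos_of_ne_zero hH
  set w : ℕ → ℝ := fun k => (H : ℝ)⁻¹ * ∑ a ∈ Finset.range H, u (k + a) with hw
  set A := (N : ℝ)⁻¹ * ∑ k ∈ Finset.range N, u k with hA
  set B := (N : ℝ)⁻¹ * ∑ k ∈ Finset.range N, w k with hB
  have hA1 : |A| ≤ 1 := abs_avg_le u zero_le_one hu N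
  have hw1 : ∀ k, |w k| ≤ 1 := fun k => abs_avg_le (fun a => u (k + a)) zero_le_one (fun a => hu _) H
  have hB1 : |B| ≤ 1 := abs_avg_le w zero_le_one hw1 N
  have hBA : B - A = (H:ℝ)⁻¹ * ∑ a ∈ Finset.range H, ((N:ℝ)⁻¹ *
      (∑ k ∈ Finset.range N, u (k + a) - ∑ k ∈ Finset.range N, u k)) := by
    simp only [mul_sub, Finset.sum_sub_distrib]
    rw [← mul_sub, mul_sub, avg_const hH, hw]
    congr 1
    rw [← Finset.mul_sum, ← Finset.mul_sum, Finset.sum_comm]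
    ring
  have hdiff : |B - A| ≤ 2 * H / N := by
    have h1 : ∀ a ∈ Finset.range H, |(N:ℝ)⁻¹ *
      (∑ k ∈ Finset.range N, u (k + a) - ∑ k ∈ Finset.range N, u k)| ≤ 2 * H / N := by
      intro a ha
      have ha : (a:ℝ) ≤ H := by exact_mod_cast (Finset.mem_range.1 ha).le
      rw [abs_mul, abs_of_nonneg (by positivity : (0:ℝ) ≤ (N:ℝ)⁻¹), div_eq_inv_mul]
      gcongr
      exact (shift_bound u hu N a).trans (by linarith)
    rw [hBA, abs_mul, abs_of_nonneg (by positivity : (0:ℝ) ≤ (H:ℝ)⁻¹)]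
    calc _ ≤ (H:ℝ)⁻¹ * ∑ _a ∈ Finset.range H, 2 * (H:ℝ) / N := by
          gcongr
          exact (Finset.abs_sum_le_sum_abs _ _).trans (Finset.sum_le_sum h1)
      _ = _ := avg_const hH _
  have hsq : B ^ 2 ≤ (N:ℝ)⁻¹ * ∑ k ∈ Finset.range N, (w k) ^ 2 := by
    have := sq_sum_le_card_mul_sum_sq (s := Finset.range N) (f := w)
    rw [Finset.card_range] at this
    rw [hB, mul_pow]
    calc _ ≤ ((N:ℝ)⁻¹) ^ 2 * (N * ∑ k ∈ Finset.range N, (w k) ^ 2) := by gcongr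
      _ = _ := by field_simp
  have hexp : (N:ℝ)⁻¹ * ∑ k ∈ Finset.range N, (w k) ^ 2 =
      ((H : ℝ)⁻¹) ^ 2 * ∑ a ∈ Finset.range H, ∑ b ∈ Finset.range H,
        ((N : ℝ)⁻¹ * ∑ k ∈ Finset.range N, u (k + a) * u (k + b)) := by
    have e : ∀ k, (w k) ^ 2 = ((H : ℝ)⁻¹) ^ 2 * ∑ a ∈ Finset.range H, ∑ b ∈ Finset.range H,
        u (k + a) * u (k + b) := by
      intro k
      rw [hw, mul_pow, pow_two (∑ a ∈ Finset.range H, _), Finset.sum_mul_sum]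
    simp only [e, ← Finset.mul_sum]
    rw [mul_left_comm]
    congr 2
    rw [Finset.sum_comm]
    refine Finset.sum_congr rfl fun a _ => ?_
    rw [Finset.sum_comm]
    simp only [Finset.mul_sum]
  rw [← hexp]
  have h4 : A ^ 2 ≤ B ^ 2 + 4 * H / N := by
    have h1 : A ^ 2 - B ^ 2 ≤ |B - A| * |B + A| := by
      rw [← abs_mul]
      have := neg_abs_le ((B - A) * (B + A))
      nlinarith
    have h2 : |B + A| ≤ 2 := (abs_add_le _ _).trans (by linarith)
    have h3 : |B - A| * |B + A| ≤ (2 * H / N) * 2 := by gcongr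
    have h5 : (2 * H / N : ℝ) * 2 = 4 * H / N := by ring
    linarith
  linarith

/-- The bookkeeping part of the van der Corput step. -/
theorem limit_step (a : ℕ → ℝ) (b : ℕ → ℕ → ℕ → ℝ) (c : ℕ → ℕ → ℝ) (m : ℕ) (hm : m ≠ 0) (L r : ℝ)
    (h1 : ∀ H N : ℕ, H ≠ 0 → N ≠ 0 → a N ≤ ((H : ℝ)⁻¹) ^ 2 * ∑ i ∈ Finset.range H,
      ∑ j ∈ Finset.range H, b i j N + 4 * H / N)
    (hc : ∀ i j, 0 ≤ c i j)
    (h2 : ∀ i j, ∀ s : ℝ, 0 < s → c i j < s ^ m → ∀ᶠ N in atTop, (b i j N) ^ 2 ≤ s)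
    (h3 : Tendsto (fun H : ℕ => ((H : ℝ)⁻¹) ^ 2 * ∑ i ∈ Finset.range H,
      ∑ j ∈ Finset.range H, c i j) atTop (nhds L))
    (hr : 0 < r) (hL : L < r ^ (2 * m)) : ∀ᶠ N in atTop, a N ≤ r := by
  have hcont : ∀ᶠ t in nhdsWithin r (Set.Iio r), L < t ^ (2 * m) ∧ 0 < t ∧ t < r := by
    have e1 : ∀ᶠ t in nhds r, L < t ^ (2 * m) :=
      (continuous_pow (2 * m)).continuousAt.eventually (lt_mem_nhds hL)
    have e2 : ∀ᶠ t in nhds r, 0 < t := lt_mem_nhds hr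
    filter_upwards [nhdsWithin_le_nhds e1, nhdsWithin_le_nhds e2, self_mem_nhdsWithin] with t x y z
    exact ⟨x, y, z⟩
  obtain ⟨t, ht, ht0, htr⟩ := hcont.exists
  set δ := (t ^ (2 * m) - L) / 2 with hδ
  have hδ0 : 0 < δ := by rw [hδ]; linarith
  obtain ⟨H, hHc, hH⟩ := ((h3.eventually (gt_mem_nhds (by linarith : L < L + δ))).and
    (eventually_ne_atTop 0)).exists
  have hH' : (0:ℝ) < H := by exact_mod_cast Nat.pos_of_ne_zero hH
  have hbb : ∀ i j, ∀ᶠ N in atTop, (b i j N) ^ (2 * m) ≤ c i j + δ := by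
    intro i j
    have hs : 0 < c i j + δ := by linarith [hc i j]
    have hp : ((c i j + δ) ^ ((m:ℝ)⁻¹)) ^ m = c i j + δ := Real.rpow_inv_natCast_pow hs.le hm
    filter_upwards [h2 i j _ (Real.rpow_pos_of_pos hs _) (by rw [hp]; linarith)] with N hN
    rw [pow_mul, ← hp]
    exact pow_le_pow_left₀ (sq_nonneg _) hN m
  have hall : ∀ᶠ N in atTop, ∀ p ∈ Finset.range H ×ˢ Finset.range H,
      (b p.1 p.2 N) ^ (2 * m) ≤ c p.1 p.2 + δ := by
    rw [Filter.eventually_all_finset]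
    exact fun p _ => hbb p.1 p.2
  have hlim : Tendsto (fun N : ℕ => 4 * (H:ℝ) / N) atTop (nhds 0) :=
    tendsto_const_div_atTop_nhds_zero_nat _
  filter_upwards [hall, hlim.eventually (gt_mem_nhds (by linarith : 0 < r - t)),
    eventually_ne_atTop 0] with N hN hN2 hN0
  have hw1 : ∑ _p ∈ Finset.range H ×ˢ Finset.range H, ((H:ℝ)⁻¹) ^ 2 = 1 := by
    rw [Finset.sum_const, Finset.card_product, Finset.card_range, nsmul_eq_mul]
    push_cast
    field_simp
  have hJ := Real.pow_arith_mean_le_arith_mean_pow_of_even (Finset.range H ×ˢ Finset.range H)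
    (fun _ => ((H:ℝ)⁻¹) ^ 2) (fun p => b p.1 p.2 N) (fun _ _ => by positivity) hw1
    (n := 2 * m) (even_two_mul m)
  have hJ2 : ∑ p ∈ Finset.range H ×ˢ Finset.range H, ((H:ℝ)⁻¹) ^ 2 * (b p.1 p.2 N) ^ (2 * m) ≤
      ∑ p ∈ Finset.range H ×ˢ Finset.range H, ((H:ℝ)⁻¹) ^ 2 * (c p.1 p.2 + δ) := by
    apply Finset.sum_le_sum
    intro p hp
    gcongr
    exact hN p hp
  simp only [mul_add, Finset.sum_add_distrib] at hJ2
  rw [← Finset.sum_mul, hw1, one_mul] at hJ2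
  simp only [← Finset.mul_sum, Finset.sum_product] at hJ hJ2
  have hlt : (((H:ℝ)⁻¹) ^ 2 * ∑ i ∈ Finset.range H, ∑ j ∈ Finset.range H, b i j N) ^ (2 * m) <
      t ^ (2 * m) := by
    have : t ^ (2 * m) = L + δ + δ := by rw [hδ]; ring
    linarith
  have hlt2 := lt_of_pow_lt_pow_left₀ _ ht0.le hlt
  have := h1 H N hH hN0
  linarith

end vdc

section lemmaB
variable {X : Type*} [mX : MeasurableSpace X] {μ : Measure X} [IsProbabilityMeasure μ]

theorem vdc_int (u : ℕ → X → ℝ) (hb : ∀ k, BM (u k)) (hu : ∀ k x, |u k x| ≤ 1) {H N : ℕ}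
    (hH : H ≠ 0) (hN : N ≠ 0) :
    ∫ x, ((N : ℝ)⁻¹ * ∑ k ∈ Finset.range N, u k x) ^ 2 ∂μ ≤
      ((H : ℝ)⁻¹) ^ 2 * ∑ a ∈ Finset.range H, ∑ b ∈ Finset.range H,
        ((N : ℝ)⁻¹ * ∑ k ∈ Finset.range N, ∫ x, u (k + a) x * u (k + b) x ∂μ) + 4 * H / N := by
  have hbb : ∀ a b, BM (fun x => (N : ℝ)⁻¹ * ∑ k ∈ Finset.range N, u (k + a) x * u (k + b) x) :=
    fun a b => (BM.const _).mul (BM.sum _ fun k => (hb (k+a)).mul (hb (k+b)))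
  have hr : BM (fun x => ((H : ℝ)⁻¹) ^ 2 * ∑ a ∈ Finset.range H, ∑ b ∈ Finset.range H,
        ((N : ℝ)⁻¹ * ∑ k ∈ Finset.range N, u (k + a) x * u (k + b) x)) :=
    (BM.const _).mul (BM.sum _ fun a => BM.sum _ fun b => hbb a b)
  have h1 := integral_mono (((BM.const _).mul (BM.sum (Finset.range N) hb)).sq.int μ)
    ((hr.add (BM.const (4 * H / N : ℝ))).int μ) (fun x => vdc_num (fun k => u k x) (fun k => hu k x) hH hN)
  refine h1.trans (le_of_eq ?_)
  rw [integral_add (hr.int μ) ((BM.const _).int μ), integral_const_mul, integral_finsetSum]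
  · congr 1
    · congr 1
      refine Finset.sum_congr rfl fun a _ => ?_
      rw [integral_finsetSum]
      · refine Finset.sum_congr rfl fun b _ => ?_
        rw [integral_const_mul, integral_finsetSum]
        exact fun k _ => ((hb (k+a)).mul (hb (k+b))).int μ
      · exact fun b _ => (hbb a b).int μ
    · simp
  · exact fun a _ => (BM.sum _ fun b => hbb a b).int μ

/-- Commuting systems with all the box measures equal to `ν`. -/
structure Sys (μ : Measure X) (ν : ∀ k, Measure (HKBox X k)) {n : ℕ} (T Tinv : Fin n → X → X) :
    Prop where
  mp : ∀ i, MeasurePreserving (T i) μ μ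
  im : ∀ i, Measurable (Tinv i)
  li : ∀ i x, Tinv i (T i x) = x
  ri : ∀ i x, T i (Tinv i x) = x
  cm : ∀ i j x, T i (T j x) = T j (T i x)
  hk : ∀ i, IsHKSeq μ (T i) ν
  hd : ∀ i j, i ≠ j → IsHKSeq μ (T i ∘ Tinv j) ν

variable {ν : ∀ k, Measure (HKBox X k)}

theorem mp_of_inv {S Sinv : X → X} (h : MeasurePreserving S μ μ) (hm : Measurable Sinv)
    (hi : ∀ x, Sinv (S x) = x) : MeasurePreserving Sinv μ μ := by
  refine ⟨hm, ?_⟩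
  conv_lhs => rw [← h.map_eq]
  rw [Measure.map_map hm h.measurable]
  have : Sinv ∘ S = id := funext hi
  rw [this, Measure.map_id]

theorem Sys.inv_comm {n : ℕ} {T Tinv : Fin n → X → X} (h : Sys μ ν T Tinv) (i j : Fin n) (x : X) :
    Tinv i (T j x) = T j (Tinv i x) := by
  rw [← h.li i (T j (Tinv i x)), h.cm i j, h.ri]

theorem Sys.inv_inv {n : ℕ} {T Tinv : Fin n → X → X} (h : Sys μ ν T Tinv) (i j : Fin n) (x : X) :
    Tinv i (Tinv j x) = Tinv j (Tinv i x) := by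
  rw [← h.li j (Tinv i (Tinv j x)), ← h.inv_comm i j, h.ri]

theorem Sys.sub {n : ℕ} {T Tinv : Fin (n+1) → X → X} (h : Sys μ ν T Tinv) (p : Fin (n+1)) :
    Sys μ ν (fun j : Fin n => T (p.succAbove j) ∘ Tinv p)
      (fun j : Fin n => T p ∘ Tinv (p.succAbove j)) where
  mp i := (h.mp _).comp (mp_of_inv (h.mp p) (h.im p) (h.li p))
  im i := (h.mp p).measurable.comp (h.im _)
  li i x := by
    simp only [Function.comp]
    rw [h.li, h.ri]
  ri i x := by
    simp only [Function.comp]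
    rw [h.li, h.ri]
  cm i j x := by
    simp only [Function.comp]
    rw [h.inv_comm, h.inv_comm, h.cm]
  hk i := h.hd _ _ (Fin.succAbove_ne p i)
  hd i j hij := by
    have e : (T (p.succAbove i) ∘ Tinv p) ∘ (T p ∘ Tinv (p.succAbove j)) =
        T (p.succAbove i) ∘ Tinv (p.succAbove j) := by
      funext x
      simp only [Function.comp]
      rw [h.li]
    rw [e]
    exact h.hd _ _ fun hh => hij (Fin.succAbove_right_injective hh)

theorem Sys.iter {n : ℕ} {T Tinv : Fin n → X → X} (h : Sys μ ν T Tinv) (i p : Fin n) (k : ℕ)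
    (x : X) : (T i ∘ Tinv p)^[k] ((T p)^[k] x) = (T i)^[k] x := by
  have hc : Function.Commute (T i) (Tinv p) := fun x => (h.inv_comm p i x).symm
  rw [hc.comp_iterate]
  simp only [Function.comp]
  have hl : Function.LeftInverse (Tinv p) (T p) := h.li p
  rw [hl.iterate k x]

theorem II_nonneg {T : X → X} (h : IsHKSeq μ T ν) {f : X → ℝ} (hf : BM f) (k : ℕ) :
    0 ≤ II ν (k+1) f := by
  have hb := prodFun_bm hf k
  have e : II ν (k+1) f = QQ (ν k) (HKBox.map T k) (HKBox.prodFun f k) (HKBox.prodFun f k) :=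
    (upTo_of_seq h (k+1)).2 k (by omega) _ _ hb hb
  rw [e]
  exact integral_nonneg fun x => mul_self_nonneg _

theorem abs_prod_le_one {ι : Type*} (s : Finset ι) (a : ι → ℝ) (h : ∀ i, |a i| ≤ 1) :
    |∏ i ∈ s, a i| ≤ 1 := by
  rw [Finset.abs_prod]
  exact Finset.prod_le_one (fun i _ => abs_nonneg _) fun i _ => h i

theorem corr_eq {n : ℕ} {T Tinv : Fin (n+1) → X → X} (h : Sys μ ν T Tinv) (p : Fin (n+1))
    {g : Fin (n+1) → X → ℝ} (hg : ∀ i, BM (g i)) (k : ℕ) :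
    ∫ x, ∏ j, g j ((T j)^[k] x) ∂μ =
      ∫ x, g p x * ∏ j : Fin n, g (p.succAbove j) ((T (p.succAbove j) ∘ Tinv p)^[k] x) ∂μ := by
  have hs := h.sub p
  have hG : BM (fun x => g p x * ∏ j : Fin n,
      g (p.succAbove j) ((T (p.succAbove j) ∘ Tinv p)^[k] x)) :=
    (hg p).mul (BM.prod _ fun j => (hg _).comp ((hs.mp j).measurable.iterate k))
  rw [← integral_comp_mp ((h.mp p).iterate k) hG.1]
  congr 1
  ext x
  rw [Fin.prod_univ_succAbove _ p]
  simp only [h.iter]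

theorem lemmaB (n : ℕ) : ∀ {T Tinv : Fin (n+1) → X → X} (_ : Sys μ ν T Tinv)
    {f : Fin (n+1) → X → ℝ} (_ : ∀ i, BM (f i)) (_ : ∀ i x, |f i x| ≤ 1) (i : Fin (n+1))
    (r : ℝ), 0 < r → II ν (n+1) (f i) < r ^ (2 ^ n) → ∀ᶠ N : ℕ in atTop,
      ∫ x, ((N : ℝ)⁻¹ * ∑ k ∈ Finset.range N, ∏ j, f j ((T j)^[k] x)) ^ 2 ∂μ ≤ r := by
  induction n with
  | zero =>
    intro T Tinv h f hf h1 i r hr hI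
    obtain rfl : i = 0 := Fin.fin_one_eq_zero i
    have ht := II_tendsto (h.hk 0) (h.mp 0) (hf 0) 0
    have e : ∀ N : ℕ, ∫ x, ((N : ℝ)⁻¹ * ∑ k ∈ Finset.range N, ∏ j, f j ((T j)^[k] x)) ^ 2 ∂μ =
        ((N : ℝ)⁻¹) ^ 2 * ∑ i ∈ Finset.range N, ∑ j ∈ Finset.range N,
          II ν 0 (fun x => f 0 ((T 0)^[i] x) * f 0 ((T 0)^[j] x)) := by
      intro N
      have hit := fun n => (hf 0).comp ((h.mp 0).measurable.iterate n)
      have e2 : ∀ x, ((N : ℝ)⁻¹ * ∑ k ∈ Finset.range N, ∏ j, f j ((T j)^[k] x)) ^ 2 =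
          ((N : ℝ)⁻¹) ^ 2 * ∑ i ∈ Finset.range N, ∑ j ∈ Finset.range N,
            f 0 ((T 0)^[i] x) * f 0 ((T 0)^[j] x) := by
        intro x
        have e0 : ∀ F : Fin (0+1) → ℝ, ∏ j, F j = F 0 := fun F => Fin.prod_univ_one F
        simp only [e0]
        rw [mul_pow, pow_two (∑ n ∈ Finset.range N, _), Finset.sum_mul_sum]
      have e3 : ∀ F : X → ℝ, II ν 0 F = ∫ x, F x ∂μ := by
        intro F
        rw [II, (h.hk 0).1]
        rfl
      simp only [e2, e3]
      rw [integral_const_mul, integral_finsetSum]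
      · congr 1
        refine Finset.sum_congr rfl fun i _ => ?_
        rw [integral_finsetSum]
        exact fun j _ => ((hit i).mul (hit j)).int _
      · exact fun i _ => (BM.sum _ fun j => (hit i).mul (hit j)).int _
    simp only [e]
    filter_upwards [ht.eventually (gt_mem_nhds hI)] with N hN
    simpa using hN.le
  | succ n ih =>
    intro T Tinv h f hf h1 i r hr hI
    obtain ⟨p, hp⟩ := exists_ne i
    obtain ⟨q, rfl⟩ := Fin.exists_succAbove_eq hp.symm
    have hs := h.sub p
    have hit := fun j k => (hf j).comp ((h.mp j).measurable.iterate k)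
    set u : ℕ → X → ℝ := fun k x => ∏ j, f j ((T j)^[k] x) with hu
    have hub : ∀ k, BM (u k) := fun k => BM.prod _ fun j => hit j k
    have hu1 : ∀ k x, |u k x| ≤ 1 := fun k x => abs_prod_le_one _ _ fun j => h1 j _
    set g : ℕ → ℕ → Fin (n+2) → X → ℝ :=
      fun a b j x => f j ((T j)^[a] x) * f j ((T j)^[b] x) with hg
    have hgb : ∀ a b j, BM (g a b j) := fun a b j => (hit j a).mul (hit j b)
    have hg1 : ∀ a b j x, |g a b j x| ≤ 1 := by
      intro a b j x
      rw [hg, abs_mul]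
      exact mul_le_one₀ (h1 _ _) (abs_nonneg _) (h1 _ _)
    refine limit_step _ (fun a b N => (N:ℝ)⁻¹ * ∑ k ∈ Finset.range N, ∫ x, u (k+a) x * u (k+b) x ∂μ)
      (fun a b => II ν (n+1) (g a b (p.succAbove q))) (2 ^ n) (by positivity)
      (II ν (n+2) (f (p.succAbove q))) r (fun H N hH hN => vdc_int u hub hu1 hH hN)
      (fun a b => II_nonneg (h.hk p) (hgb a b _) n) ?_
      (II_tendsto (h.hk _) (h.mp _) (hf _) (n+1)) hr (by rwa [← pow_succ'])
    intro a b s hs0 hlt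
    have hIH := ih hs (f := fun j => g a b (p.succAbove j)) (fun j => hgb a b _)
      (fun j => hg1 a b _) q s hs0 hlt
    filter_upwards [hIH] with N hN
    refine le_trans ?_ hN
    have hAb : BM (fun x => (N : ℝ)⁻¹ * ∑ k ∈ Finset.range N,
        ∏ j : Fin (n+1), g a b (p.succAbove j) ((T (p.succAbove j) ∘ Tinv p)^[k] x)) :=
      (BM.const _).mul (BM.sum _ fun k => BM.prod _ fun j =>
        (hgb a b _).comp ((hs.mp j).measurable.iterate k))
    have e : (N:ℝ)⁻¹ * ∑ k ∈ Finset.range N, ∫ x, u (k+a) x * u (k+b) x ∂μ =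
        ∫ x, g a b p x * ((N : ℝ)⁻¹ * ∑ k ∈ Finset.range N,
        ∏ j : Fin (n+1), g a b (p.succAbove j) ((T (p.succAbove j) ∘ Tinv p)^[k] x)) ∂μ := by
      have e1 : ∀ k, ∫ x, u (k+a) x * u (k+b) x ∂μ = ∫ x, g a b p x *
          ∏ j : Fin (n+1), g a b (p.succAbove j) ((T (p.succAbove j) ∘ Tinv p)^[k] x) ∂μ := by
        intro k
        rw [← corr_eq h p (hgb a b) k]
        congr 1
        ext x
        simp only [hu, hg, ← Finset.prod_mul_distrib]
        refine Finset.prod_congr rfl fun j _ => ?_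
        rw [Nat.add_comm k a, Nat.add_comm k b, Function.iterate_add_apply,
          Function.iterate_add_apply]
      simp only [e1]
      rw [← integral_finsetSum, ← integral_const_mul]
      · congr 1
        ext x
        rw [← Finset.mul_sum]
        ring
      · exact fun k _ => ((hgb a b p).mul (BM.prod _ fun j =>
          (hgb a b _).comp ((hs.mp j).measurable.iterate k))).int μ
    rw [e]
    refine (cs_sq (hgb a b p) hAb).trans ?_
    have hg2 : ∫ x, (g a b p x) ^ 2 ∂μ ≤ 1 := by
      have := integral_mono ((hgb a b p).sq.int μ) ((BM.const 1).int μ)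
        (fun x => (sq_le_one_iff_abs_le_one _).2 (hg1 a b p x))
      simpa using this
    exact mul_le_of_le_one_left (integral_nonneg fun x => sq_nonneg _) hg2

end lemmaB

theorem meas_const_mul {X : Type*} [m : MeasurableSpace X] {f : X → ℝ} (hf : Measurable f) (c : ℝ) :
    Measurable (fun x => c * f x) := hf.const_mul c

theorem HK_core {X : Type*} [m : MeasurableSpace X]
    (μ : Measure X) [IsProbabilityMeasure μ] (l : ℕ) (hl : 1 ≤ l)
    (T Tinv : Fin l → X → X)
    (hTinvMeas : ∀ i, Measurable (Tinv i))
    (hinv : ∀ i, Function.LeftInverse (Tinv i) (T i) ∧ Function.RightInverse (Tinv i) (T i))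
    (hcomm : ∀ i j, T i ∘ T j = T j ∘ T i)
    (herg : ∀ i, Ergodic (T i) μ)
    (hergdiff : ∀ i j, i ≠ j → Ergodic (T i ∘ Tinv j) μ)
    (f : Fin l → X → ℝ) (hf : ∀ i, Measurable (f i)) (hbd : ∀ i, ∃ C, ∀ x, |f i x| ≤ C)
    (j : Fin l) (ν : ∀ k, Measure (HKBox X k)) (hν : IsHKSeq μ (T j) ν)
    (i : Fin l) (hzero : ∀ c : ℝ, HKseminorm ν l (fun x => c * f i x) = 0) :
    Filter.Tendsto
      (fun N : ℕ => eLpNorm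
        (fun x => (N : ℝ)⁻¹ * ∑ n ∈ Finset.range N, ∏ i, f i ((T i)^[n] x)) 2 μ)
      Filter.atTop (nhds 0) := by
  obtain ⟨n, rfl⟩ : ∃ n, l = n + 1 := ⟨l - 1, by omega⟩
  have hc : ∀ a b x, T a (T b x) = T b (T a x) := fun a b x => congrFun (hcomm a b) x
  have hli : ∀ a x, Tinv a (T a x) = x := fun a x => (hinv a).1 x
  have hri : ∀ a x, T a (Tinv a x) = x := fun a x => (hinv a).2 x
  have hic : ∀ a b x, Tinv a (T b x) = T b (Tinv a x) := by
    intro a b x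
    rw [← hli a (T b (Tinv a x)), hc a b, hri]
  have hsys : Sys μ ν T Tinv :=
    { mp := fun a => (herg a).toMeasurePreserving
      im := hTinvMeas
      li := hli
      ri := hri
      cm := hc
      hk := fun a => seq_transfer hν (herg j) (herg a) (hc a j) (hTinvMeas j) (hli j)
        (hTinvMeas a) (hli a)
      hd := fun a b hab => seq_transfer (Sinv := T b ∘ Tinv a) hν (herg j) (hergdiff a b hab)
        (fun x => by simp only [Function.comp]; rw [hic, hc]) (hTinvMeas j) (hli j)
        ((herg b).toMeasurePreserving.measurable.comp (hTinvMeas a))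
        (fun x => by simp only [Function.comp]; rw [hli, hri]) }
  choose C hC using hbd
  set D : Fin (n+1) → ℝ := fun a => max (C a) 1 with hD
  have hD0 : ∀ a, 0 < D a := fun a => lt_of_lt_of_le one_pos (le_max_right _ _)
  have hDC : ∀ a x, |f a x| ≤ D a := fun a x => (hC a x).trans (le_max_left _ _)
  set g : Fin (n+1) → X → ℝ := fun a x => (D a)⁻¹ * f a x with hg
  have hg1 : ∀ a x, |g a x| ≤ 1 := by
    intro a x
    rw [hg, abs_mul, abs_of_pos (inv_pos.2 (hD0 a)), inv_mul_le_one₀ (hD0 a)]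
    exact hDC a x
  have hgb : ∀ a, BM (g a) := fun a => ⟨(hf a).const_mul _, 1, hg1 a⟩
  have hsem : HKseminorm ν (n+1) (g i) = 0 := hzero _
  have hII : II ν (n+1) (g i) = 0 := by
    have h0 := II_nonneg (hsys.hk i) (hgb i) n
    exact ((Real.rpow_eq_zero h0 (by positivity)).1 hsem)
  set A : ℕ → X → ℝ := fun N x =>
    (N : ℝ)⁻¹ * ∑ k ∈ Finset.range N, ∏ a, g a ((T a)^[k] x) with hA
  have hAb : ∀ N, BM (A N) := fun N => (BM.const _).mul (BM.sum _ fun k => BM.prod _ fun a =>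
    (hgb a).comp ((hsys.mp a).measurable.iterate k))
  have hlim : Tendsto (fun N => ∫ x, (A N x) ^ 2 ∂μ) atTop (nhds 0) := by
    rw [Metric.tendsto_nhds]
    intro ε hε
    filter_upwards [lemmaB n hsys hgb hg1 i (ε / 2) (by positivity)
      (by rw [hII]; positivity)] with N hN
    have h0 : 0 ≤ ∫ x, (A N x) ^ 2 ∂μ := integral_nonneg fun x => sq_nonneg _
    rw [Real.dist_eq, sub_zero, abs_of_nonneg h0]
    exact lt_of_le_of_lt hN (by linarith)
  have hnorm : ∀ N, eLpNorm (A N) 2 μ = ENNReal.ofReal ((∫ x, (A N x) ^ 2 ∂μ) ^ ((2:ℝ)⁻¹)) := by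
    intro N
    rw [((hAb N).memLp μ 2).eLpNorm_eq_integral_rpow_norm two_ne_zero ENNReal.ofNat_ne_top]
    simp
  have hlim2 : Tendsto (fun N => eLpNorm (A N) 2 μ) atTop (nhds 0) := by
    simp only [hnorm]
    have h1 := hlim.rpow_const (p := (2:ℝ)⁻¹) (Or.inr (by positivity))
    rw [Real.zero_rpow (by positivity)] at h1
    simpa using ENNReal.tendsto_ofReal h1
  have hfin : ∀ N : ℕ, (fun x => (N : ℝ)⁻¹ * ∑ k ∈ Finset.range N, ∏ a, f a ((T a)^[k] x)) =
      (∏ a, D a) • A N := by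
    intro N
    funext x
    have e : ∀ a y, f a y = D a * g a y := by
      intro a y
      rw [hg]
      have := (hD0 a).ne'
      field_simp
    simp only [e, Finset.prod_mul_distrib, ← Finset.mul_sum, Pi.smul_apply, smul_eq_mul, hA]
    ring
  simp only [hfin, eLpNorm_const_smul]
  have h5 := ENNReal.Tendsto.const_mul (a := ‖∏ a, D a‖ₑ) hlim2 (Or.inr enorm_ne_top)
  rwa [mul_zero] at h5

/-- Under the hypotheses of the main theorem, the Host–Kra factor `𝒵_{l-1}` is a
characteristic factor: if `𝔼(fᵢ | 𝒵_{l-1}) = 0` for some `i`, then the multiple ergodic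
averages converge to `0` in `L²(μ)`. -/
theorem HK_factor_is_characteristic {X : Type*} [m : MeasurableSpace X]
    (μ : Measure X) [IsProbabilityMeasure μ] (l : ℕ) (hl : 1 ≤ l)
    (T Tinv : Fin l → X → X)
    (hTinvMeas : ∀ i, Measurable (Tinv i))
    (hinv : ∀ i, Function.LeftInverse (Tinv i) (T i) ∧ Function.RightInverse (Tinv i) (T i))
    (hcomm : ∀ i j, T i ∘ T j = T j ∘ T i)
    (herg : ∀ i, Ergodic (T i) μ)
    (hergdiff : ∀ i j, i ≠ j → Ergodic (T i ∘ Tinv j) μ)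
    (f : Fin l → X → ℝ) (hf : ∀ i, Measurable (f i)) (hbd : ∀ i, ∃ C, ∀ x, |f i x| ≤ C)
    (j : Fin l) (ν : ∀ k, Measure (HKBox X k)) (hν : IsHKSeq μ (T j) ν)
    -- `𝒵` is the common Host–Kra factor `𝒵_{l-1}`, characterized by the vanishing of the
    -- `l`-th seminorm, and invariant under all the `T i`:
    (𝒵 : MeasurableSpace X) (h𝒵 : 𝒵 ≤ m)
    (h𝒵inv : ∀ i s, MeasurableSet[𝒵] s → MeasurableSet[𝒵] (T i ⁻¹' s))
    (hchar : ∀ g : X → ℝ, Measurable[m] g → (∃ C, ∀ x, |g x| ≤ C) →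
      ((μ[g | 𝒵]) =ᵐ[μ] 0 ↔ (@HKseminorm X m ν l g) = 0))
    (i : Fin l) (hzero : (μ[f i | 𝒵]) =ᵐ[μ] 0) :
    Filter.Tendsto
      (fun N : ℕ => eLpNorm
        (fun x => (N : ℝ)⁻¹ * ∑ n ∈ Finset.range N, ∏ i, f i ((T i)^[n] x)) 2 μ)
      Filter.atTop (nhds 0) := by
  refine @HK_core X m μ _ l hl T Tinv hTinvMeas hinv hcomm herg hergdiff f hf hbd j ν hν i ?_
  intro c
  refine (hchar (fun x => c * f i x) (@meas_const_mul X m _ (hf i) c) ?_).1 ?_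
  · obtain ⟨C, hC⟩ := hbd i
    refine ⟨|c| * C, fun x => ?_⟩
    rw [abs_mul]
    exact mul_le_mul_of_nonneg_left (hC x) (abs_nonneg _)
  · have h1 : μ[(fun x => c * f i x) | 𝒵] =ᵐ[μ] c • μ[f i | 𝒵] := condExp_smul c (f i) 𝒵
    filter_upwards [h1, hzero] with x h2 h3
    rw [h2, Pi.smul_apply, h3]
    simp
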